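/- arXiv:math/0411339 — 3 statements merged into one kernel-verified Lean document; each statement's English description precedes it below -/
import Mathlib

section
/- Let F_1, F_2, … be a uniformly attracting sequence of correctly ordered automorphisms of ℂ^k (each fixing the origin). Then the basin of attraction Ω = {z ∈ ℂ^k : F(n)(z) → 0 as n → ∞} is biholomorphic to ℂ^k. -/
open Metric Filter Topology

noncomputable section

/-- `ℂ^k` with the Euclidean norm. -/
abbrev Ck (k : ℕ) := EuclideanSpace ℂ (Fin k)

/-- `seqComp F n = F_{n-1} ∘ ⋯ ∘ F_0` (the composition of the first `n` maps). -/
def seqComp {α : Type*} (f : ℕ → α → α) : ℕ → α → α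
  | 0 => id
  | n + 1 => f n ∘ seqComp f n

/-- An automorphism of `ℂ^k`: a bijective holomorphic map with holomorphic inverse. -/
def IsAutomorphism {k : ℕ} (F : Ck k → Ck k) : Prop :=
  Differentiable ℂ F ∧ ∃ Finv : Ck k → Ck k, Differentiable ℂ Finv ∧
    Function.LeftInverse Finv F ∧ Function.RightInverse Finv F

/-- A set `Ω ⊆ ℂ^k` is biholomorphic to `ℂ^k`. -/
def BiholoToC {k : ℕ} (Ω : Set (Ck k)) : Prop :=
  ∃ (Ψ Φ : Ck k → Ck k),
    DifferentiableOn ℂ Ψ Ω ∧ Differentiable ℂ Φ ∧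
    (∀ w, Φ w ∈ Ω) ∧ (∀ z ∈ Ω, Φ (Ψ z) = z) ∧ (∀ w, Ψ (Φ w) = w)

/-- The matrix of the derivative of `F` at `0`, in the standard basis:
entry `(i, j)` is the `i`-th coordinate of `F'(0)` applied to the `j`-th basis vector. -/
def derivMatrix {k : ℕ} (F : Ck k → Ck k) : Matrix (Fin k) (Fin k) ℂ :=
  fun i j => fderiv ℂ F 0 (EuclideanSpace.single j 1) i

/-- `F` is in lower triangular form: `F'(0)` is a lower triangular matrix. -/
def LowerTriAtZero {k : ℕ} (F : Ck k → Ck k) : Prop :=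
  ∀ i j : Fin k, i < j → derivMatrix F i j = 0

/-- `F` (in lower triangular form, with diagonal entries `λ_1, …, λ_k` of `F'(0)`)
is correctly ordered: `|λ_j||λ_i| < |λ_l|` whenever `l ≤ j`, for every `i`. -/
def CorrectlyOrdered {k : ℕ} (F : Ck k → Ck k) : Prop :=
  LowerTriAtZero F ∧
    ∀ l j i : Fin k, l ≤ j →
      ‖derivMatrix F j j‖ * ‖derivMatrix F i i‖ < ‖derivMatrix F l l‖

/-- A sequence of correctly ordered automorphisms is uniformly attracting: there are
`0 < a < b < 1` with `a‖z‖ ≤ ‖F_n z‖ ≤ b‖z‖` on the unit ball, and `ξ < 1` with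
`|λ_{n,i}||λ_{n,j}| ≤ ξ|λ_{n,l}|` whenever `l ≤ j`, for every `i`. -/
def UniformlyAttracting {k : ℕ} (F : ℕ → Ck k → Ck k) : Prop :=
  ∃ a b : ℝ, 0 < a ∧ a < b ∧ b < 1 ∧
    (∀ n, ∀ z ∈ ball (0 : Ck k) 1, a * ‖z‖ ≤ ‖F n z‖ ∧ ‖F n z‖ ≤ b * ‖z‖) ∧
    ∃ ξ : ℝ, ξ < 1 ∧ ∀ n, ∀ l j i : Fin k, l ≤ j →
      ‖derivMatrix (F n) i i‖ * ‖derivMatrix (F n) j j‖ ≤ ξ * ‖derivMatrix (F n) l l‖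

/-!
The idea is to conjugate the sequence, near the origin and uniformly in `n`, to triangular
automorphisms `g_n(z)_j = λ_{n,j} z_j + q_{n,j}(z_l : l < j)`, whose basin is all of `ℂ^k`: the
coordinates tend to `0` one after another. Pulling back along far iterates, a local conjugacy of two
sequences of automorphisms extends to a biholomorphism of their basins.

After a diagonal scaling the derivatives `F_n'(0)` are nearly diagonal. The coordinates are then
straightened one at a time. Suppose the coordinates below `i` are already triangular. Comparing two
points with the same coordinates below `i`, the obstruction `φ_n` to coordinate `i` being linear in
`z_i` is bounded by the weight `max(‖x‖, ‖y‖) ‖x - y‖`, which decays under iteration faster than the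
products of the `λ_{n,i}` because of `|λ_i||λ_j| ≤ ξ|λ_l|`. Hence the cohomological equation
`λ_n S_n = φ_n + S_{n+1} ∘ f_n` is solved by a convergent series, and `z_i + S_n(z)` is the new
coordinate. What remains of coordinate `i` is a function of the lower coordinates, which is
replaced by an entire `q_{n,i}` by removing its terms of high order.
-/

/-! ### Bounds for holomorphic maps -/

section HolomorphicMaps

variable {E G : Type*} [NormedAddCommGroup E] [NormedSpace ℂ E]
  [NormedAddCommGroup G] [NormedSpace ℂ G]

lemma norm_fderiv_le_of_norm_le_on_ball {f : E → G} {c : E} {R C : ℝ} (hR : 0 < R)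
    (hf : DifferentiableOn ℂ f (ball c R)) (hC : ∀ z ∈ ball c R, ‖f z‖ ≤ C) :
    ‖fderiv ℂ f c‖ ≤ 2 * C / R := by
  refine Complex.norm_fderiv_le_div_of_mapsTo_ball hf (fun z hz => ?_) hR
  rw [mem_closedBall, dist_eq_norm, two_mul]
  exact norm_sub_le_of_le (hC z hz) (hC c (mem_ball_self hR))

lemma uniformCauchySeqOn_fderiv {ι : Type*} {l : Filter ι} {f : ι → E → G} {c : E} {R : ℝ}
    (hR : 0 < R) (hf : ∀ᶠ n in l, DifferentiableOn ℂ (f n) (ball c R))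
    (hcauchy : UniformCauchySeqOn f l (ball c R)) :
    UniformCauchySeqOn (fun n => fderiv ℂ (f n)) l (ball c (R / 2)) := by
  intro u hu
  obtain ⟨ε, hε, hεu⟩ := Metric.mem_uniformity_dist.1 hu
  filter_upwards [hcauchy _ (Metric.dist_mem_uniformity (show 0 < ε * R / 8 by positivity)),
    (hf.prod_mk hf)] with ⟨m, n⟩ hmn ⟨hm, hn⟩ y hy
  have hsub : ball y (R / 2) ⊆ ball c R :=
    ball_subset_ball' (by linarith [mem_ball.1 hy])
  have hdiff (p : ι) (hp : DifferentiableOn ℂ (f p) (ball c R)) : DifferentiableAt ℂ (f p) y :=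
    hp.differentiableAt (isOpen_ball.mem_nhds (hsub (mem_ball_self (by positivity))))
  apply hεu
  rw [dist_eq_norm, ← fderiv_sub (hdiff m hm) (hdiff n hn)]
  calc ‖fderiv ℂ (f m - f n) y‖
      ≤ 2 * (ε * R / 8) / (R / 2) :=
        norm_fderiv_le_of_norm_le_on_ball (by positivity) ((hm.sub hn).mono hsub) fun z hz => by
          simpa only [Pi.sub_apply, ← dist_eq_norm] using (hmn z (hsub hz)).le
    _ = ε / 2 := by field_simp; norm_num
    _ < ε := half_lt_self hε

lemma differentiableAt_of_tendstoUniformlyOn_ball [CompleteSpace G] {ι : Type*} {l : Filter ι}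
    [l.NeBot] {f : ι → E → G} {g : E → G} {c : E} {R : ℝ} (hR : 0 < R)
    (hf : ∀ᶠ n in l, DifferentiableOn ℂ (f n) (ball c R))
    (hlim : TendstoUniformlyOn f g l (ball c R)) : DifferentiableAt ℂ g c := by
  have hcauchy := uniformCauchySeqOn_fderiv hR hf hlim.uniformCauchySeqOn
  choose! g' hg' using fun y (hy : y ∈ ball c (R / 2)) =>
    CompleteSpace.complete (hcauchy.cauchy_map hy)
  have hnhds : ball c (R / 2) ∈ 𝓝 c := ball_mem_nhds c (half_pos hR)
  have hsub : ball c (R / 2) ⊆ ball c R := ball_subset_ball (half_le_self hR.le)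
  refine HasFDerivAt.differentiableAt <| hasFDerivAt_of_tendstoUniformlyOnFilter (f := f)
    ((hcauchy.tendstoUniformlyOn_of_tendsto hg').tendstoUniformlyOnFilter.mono_right
      (le_principal_iff.2 hnhds)) ?_ ?_
  · filter_upwards [hf.prod_mk hnhds] with ⟨n, y⟩ ⟨hn, hy⟩
    exact (hn.differentiableAt (isOpen_ball.mem_nhds (hsub hy))).hasFDerivAt
  · filter_upwards [hnhds] with y hy using hlim.tendsto_at (hsub hy)

lemma differentiableOn_tsum_of_summable [CompleteSpace G] {f : ℕ → E → G} {U : Set E}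
    (hU : IsOpen U) {u : ℕ → ℝ} (hu : Summable u) (hf : ∀ n, DifferentiableOn ℂ (f n) U)
    (hfu : ∀ n, ∀ z ∈ U, ‖f n z‖ ≤ u n) : DifferentiableOn ℂ (fun z => ∑' n, f n z) U := by
  intro c hc
  obtain ⟨R, hR, hRU⟩ := Metric.isOpen_iff.1 hU c hc
  refine (differentiableAt_of_tendstoUniformlyOn_ball hR (Eventually.of_forall fun n => ?_)
    (tendstoUniformlyOn_tsum_nat hu fun n z hz => hfu n z (hRU hz))).differentiableWithinAt
  exact DifferentiableOn.fun_sum fun i _ => (hf i).mono hRU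

lemma norm_fderiv_le_of_norm_le_sq {g : E → G} {r C : ℝ} (hg : DifferentiableOn ℂ g (ball 0 r))
    (hC₀ : 0 ≤ C) (hC : ∀ z ∈ ball (0 : E) r, ‖g z‖ ≤ C * ‖z‖ ^ 2) {ρ : ℝ} (hρ₀ : 0 < ρ)
    (hρ : ρ ≤ r / 2) {x : E} (hx : ‖x‖ ≤ ρ) : ‖fderiv ℂ g x‖ ≤ 8 * C * ρ := by
  have hnorm (y : E) (hy : y ∈ ball x ρ) : ‖y‖ < 2 * ρ := by
    linarith [norm_sub_norm_le y x, mem_ball_iff_norm.1 hy]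
  have hsub : ball x ρ ⊆ ball 0 r := fun y hy =>
    mem_ball_zero_iff.2 (by linarith [hnorm y hy])
  calc ‖fderiv ℂ g x‖ ≤ 2 * (C * (2 * ρ) ^ 2) / ρ :=
        norm_fderiv_le_of_norm_le_on_ball hρ₀ (hg.mono hsub) fun y hy =>
          (hC y (hsub hy)).trans (by gcongr; exact (hnorm y hy).le)
    _ = 8 * C * ρ := by field_simp; ring

lemma norm_sub_le_of_norm_le_sq {g : E → G} {r C : ℝ} (hg : DifferentiableOn ℂ g (ball 0 r))
    (hC₀ : 0 ≤ C) (hC : ∀ z ∈ ball (0 : E) r, ‖g z‖ ≤ C * ‖z‖ ^ 2) {z w : E}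
    (hz : z ∈ ball 0 (r / 2)) (hw : w ∈ ball 0 (r / 2)) :
    ‖g z - g w‖ ≤ 8 * C * max ‖z‖ ‖w‖ * ‖z - w‖ := by
  rw [mem_ball_zero_iff] at hz hw
  obtain hρ | hρ := le_or_gt (max ‖z‖ ‖w‖) 0
  · obtain ⟨hz₀, hw₀⟩ := max_le_iff.1 hρ
    simp [norm_le_zero_iff.1 hz₀, norm_le_zero_iff.1 hw₀]
  let _ : NormedSpace ℝ E := NormedSpace.restrictScalars ℝ ℂ E
  have hρr : max ‖z‖ ‖w‖ < r / 2 := max_lt hz hw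
  refine (convex_closedBall (0 : E) (max ‖z‖ ‖w‖)).norm_image_sub_le_of_norm_fderiv_le (𝕜 := ℂ)
    (fun x hx => ?_) (fun x hx => norm_fderiv_le_of_norm_le_sq hg hC₀ hC hρ hρr.le
      (mem_closedBall_zero_iff.1 hx))
    (mem_closedBall_zero_iff.2 (le_max_right _ _)) (mem_closedBall_zero_iff.2 (le_max_left _ _))
  refine hg.differentiableAt (isOpen_ball.mem_nhds (mem_ball_zero_iff.2 ?_))
  linarith [mem_closedBall_zero_iff.1 hx]

lemma norm_sub_fderiv_le_sq {f : E → G} {L : E →L[ℂ] G} {r C : ℝ}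
    (hf : DifferentiableOn ℂ f (ball 0 r)) (h0 : f 0 = 0) (hL : HasFDerivAt f L 0)
    (hC : ∀ z ∈ ball (0 : E) r, ‖f z‖ ≤ C) {z : E} (hz : z ∈ ball 0 r) :
    ‖f z - L z‖ ≤ 3 * C / r ^ 2 * ‖z‖ ^ 2 := by
  have hr : 0 < r := pos_of_mem_ball hz
  have hLr : ‖L‖ ≤ 2 * C / r := hL.fderiv ▸ norm_fderiv_le_of_norm_le_on_ball hr hf hC
  have hmaps : Set.MapsTo (fun z => f z - L z) (ball 0 r) (closedBall (f 0 - L 0) (3 * C)) := by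
    intro y hy
    have hLy : ‖L y‖ ≤ 2 * C := calc
      ‖L y‖ ≤ 2 * C / r * r := L.le_of_opNorm_le_of_le hLr (mem_ball_zero_iff.1 hy).le
      _ = 2 * C := div_mul_cancel₀ _ hr.ne'
    simp only [h0, map_zero, sub_zero, mem_closedBall_zero_iff]
    linarith [norm_sub_le_of_le (hC y hy) hLy]
  have hlittle := hL.isLittleO
  have := Complex.dist_le_mul_div_pow_of_mapsTo_ball_of_isLittleO (n := 1)
    (hf.sub L.differentiable.differentiableOn) hmaps
    (by simpa only [Pi.sub_apply, h0, map_zero, sub_zero, pow_one] using hlittle.norm_right) hz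
  simp only [Pi.sub_apply, h0, map_zero, sub_zero, dist_zero_right] at this
  exact this.trans_eq (by rw [one_add_one_eq_two, div_pow, mul_div_assoc', div_mul_eq_mul_div])

lemma hasFDerivAt_zero_of_norm_sub_le_sq {g : E → G} {L : E →L[ℂ] G} {r C : ℝ} (hr : 0 < r)
    (hC : ∀ z ∈ ball (0 : E) r, ‖g z - L z‖ ≤ C * ‖z‖ ^ 2) :
    HasFDerivAt g L 0 := by
  have hO : (fun z => g z - L z) =O[𝓝 0] fun z : E => ‖z - 0‖ ^ 2 := by
    refine Asymptotics.IsBigO.of_bound C ?_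
    filter_upwards [ball_mem_nhds (0 : E) hr] with z hz
    simpa using hC z hz
  simpa [Pi.add_def] using (hO.hasFDerivAt one_lt_two).add L.hasFDerivAt

end HolomorphicMaps

/-! ### Entire truncations of Taylor series -/

section EntireTruncation

variable {E G : Type*} [NormedAddCommGroup E] [NormedSpace ℂ E]
  [NormedAddCommGroup G] [NormedSpace ℂ G] [CompleteSpace G]

lemma norm_dslope_le_of_norm_le_pow {φ : ℂ → G} {R A : ℝ} {m : ℕ}
    (hφ : DifferentiableOn ℂ φ (ball 0 R))
    (hA : ∀ t ∈ ball (0 : ℂ) R, ‖φ t‖ ≤ A * ‖t‖ ^ (m + 1)) {t : ℂ} (ht : t ∈ ball 0 R) :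
    ‖dslope φ 0 t‖ ≤ A * ‖t‖ ^ m := by
  have hR : 0 < R := pos_of_mem_ball ht
  have hφ0 : φ 0 = 0 := by simpa using hA 0 (mem_ball_self hR)
  have hne (s : ℂ) (hs : s ∈ ball 0 R) (hs0 : s ≠ 0) : ‖dslope φ 0 s‖ ≤ A * ‖s‖ ^ m := by
    have hs' : 0 < ‖s‖ := norm_pos_iff.2 hs0
    rw [dslope_of_ne _ hs0, slope_def_module, hφ0, sub_zero, sub_zero, norm_smul, norm_inv,
      inv_mul_le_iff₀ hs']
    exact (hA s hs).trans_eq (by ring)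
  obtain rfl | ht0 := eq_or_ne t 0
  · have hcont : ContinuousAt (dslope φ 0) 0 :=
      ((Complex.differentiableOn_dslope (ball_mem_nhds _ hR)).2 hφ).continuousOn.continuousAt
        (ball_mem_nhds _ hR)
    refine le_of_tendsto_of_tendsto (b := 𝓝[≠] 0)
      (hcont.norm.tendsto.mono_left nhdsWithin_le_nhds)
      (((continuous_norm.pow m).const_mul A).continuousAt.tendsto.mono_left nhdsWithin_le_nhds) ?_
    filter_upwards [self_mem_nhdsWithin, mem_nhdsWithin_of_mem_nhds (ball_mem_nhds _ hR)]
      with s hs0 hs using hne s hs hs0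
  · exact hne t ht ht0

lemma exists_norm_sub_pow_smul_le {R A : ℝ} (m : ℕ) {φ : ℂ → G}
    (hφ : DifferentiableOn ℂ φ (ball 0 R)) (hA : ∀ t ∈ ball (0 : ℂ) R, ‖φ t‖ ≤ A * ‖t‖ ^ m) :
    ∃ c : G, ∀ t ∈ ball (0 : ℂ) R, ‖φ t - t ^ m • c‖ ≤ 2 * A / R * ‖t‖ ^ (m + 1) := by
  induction m generalizing φ with
  | zero =>
    refine ⟨φ 0, fun t ht => ?_⟩
    have h0 := hA 0 (mem_ball_self (pos_of_mem_ball ht))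
    simpa [dist_eq_norm] using Complex.dist_le_div_mul_dist_of_mapsTo_ball hφ
      (fun s hs => by
        simpa [dist_eq_norm, two_mul] using norm_sub_le_of_le (hA s hs) h0) ht
  | succ m ih =>
    obtain hR | hR := le_or_gt R 0
    · exact ⟨0, fun t ht => absurd (pos_of_mem_ball ht) hR.not_gt⟩
    have hφ0 : φ 0 = 0 := by simpa using hA 0 (mem_ball_self hR)
    obtain ⟨c, hc⟩ := ih ((Complex.differentiableOn_dslope (ball_mem_nhds _ hR)).2 hφ)
      fun t ht => norm_dslope_le_of_norm_le_pow hφ hA ht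
    refine ⟨c, fun t ht => ?_⟩
    have hφt : φ t = t • dslope φ 0 t := by simpa [hφ0] using (sub_smul_dslope φ 0 t).symm
    calc ‖φ t - t ^ (m + 1) • c‖ = ‖t‖ * ‖dslope φ 0 t - t ^ m • c‖ := by
          rw [hφt, pow_succ', mul_smul, ← smul_sub, norm_smul]
      _ ≤ ‖t‖ * (2 * A / R * ‖t‖ ^ (m + 1)) := by gcongr; exact hc t ht
      _ = 2 * A / R * ‖t‖ ^ (m + 1 + 1) := by ring

lemma exists_norm_comp_smul_sub_le {g : E → G} {r C : ℝ} {m : ℕ}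
    (hg : DifferentiableOn ℂ g (ball 0 r)) (hC : ∀ z ∈ ball (0 : E) r, ‖g z‖ ≤ C * ‖z‖ ^ m)
    (z : E) : ∃ c : G, ∀ t : ℂ, t • z ∈ ball (0 : E) r →
      ‖g (t • z) - t ^ m • c‖ ≤ 2 * C / r * ‖t • z‖ ^ (m + 1) := by
  obtain rfl | hz := eq_or_ne z 0
  · refine ⟨g 0, fun t ht => ?_⟩
    cases m with
    | zero => simp
    | succ m =>
      have hg0 : g 0 = 0 := by simpa using hC 0 (by simpa using ht)
      simp [hg0]
  have hz' : 0 < ‖z‖ := norm_pos_iff.2 hz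
  have hmem (t : ℂ) : t ∈ ball (0 : ℂ) (r / ‖z‖) ↔ t • z ∈ ball (0 : E) r := by
    rw [mem_ball_zero_iff, mem_ball_zero_iff, norm_smul, lt_div_iff₀ hz']
  obtain ⟨c, hc⟩ := exists_norm_sub_pow_smul_le (φ := fun t => g (t • z)) (A := C * ‖z‖ ^ m) m
    (hg.comp (by fun_prop) fun t ht => (hmem t).1 ht) fun t ht =>
      (hC _ ((hmem t).1 ht)).trans_eq (by rw [norm_smul]; ring)
  refine ⟨c, fun t ht => (hc t ((hmem t).2 ht)).trans_eq ?_⟩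
  rw [norm_smul]
  field_simp
  ring

-- `H z` is the limit of `t⁻ᵐ g (t z)` as `t → 0`, locally uniformly in `z`.
lemma exists_differentiable_norm_sub_le_pow_succ {g : E → G} {r C : ℝ} {m : ℕ} (hr : 0 < r)
    (hg : DifferentiableOn ℂ g (ball 0 r)) (hC : ∀ z ∈ ball (0 : E) r, ‖g z‖ ≤ C * ‖z‖ ^ m) :
    ∃ H : E → G, Differentiable ℂ H ∧
      ∀ z ∈ ball (0 : E) r, ‖g z - H z‖ ≤ 2 * C / r * ‖z‖ ^ (m + 1) := by
  choose H hH using exists_norm_comp_smul_sub_le hg hC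
  refine ⟨H, fun c => ?_, fun z hz => by simpa using hH z 1 (by simpa using hz)⟩
  have hnorm (z : E) (hz : z ∈ ball c 1) : ‖z‖ ≤ ‖c‖ + 1 := by
    linarith [norm_sub_norm_le z c, mem_ball_iff_norm.1 hz]
  have hsmall {ε : ℝ} (hε : 0 < ε) (K : ℝ) : ∀ᶠ t : ℂ in 𝓝[≠] 0, ‖t‖ * K < ε :=
    (Continuous.tendsto' (by fun_prop) (0 : ℂ) 0 (by simp)).mono_left nhdsWithin_le_nhds
      |>.eventually_lt_const hε
  have hball : ∀ᶠ t : ℂ in 𝓝[≠] 0, ∀ z ∈ ball c 1, t • z ∈ ball (0 : E) r := by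
    filter_upwards [hsmall hr (‖c‖ + 1)] with t ht z hz
    rw [mem_ball_zero_iff, norm_smul]
    exact (mul_le_mul_of_nonneg_left (hnorm z hz) (norm_nonneg t)).trans_lt ht
  refine differentiableAt_of_tendstoUniformlyOn_ball (l := 𝓝[≠] (0 : ℂ))
    (f := fun t z => (t ^ m)⁻¹ • g (t • z)) one_pos ?_ ?_
  · filter_upwards [hball] with t ht
    exact (hg.comp (by fun_prop) ht).const_smul _
  refine Metric.tendstoUniformlyOn_iff.2 fun ε hε => ?_
  filter_upwards [hball, hsmall hε (|2 * C / r| * (‖c‖ + 1) ^ (m + 1)), self_mem_nhdsWithin]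
    with t ht htε ht0 z hz
  have ht' : 0 < ‖t‖ := norm_pos_iff.2 ht0
  have hsub : H z - (t ^ m)⁻¹ • g (t • z) = -((t ^ m)⁻¹ • (g (t • z) - t ^ m • H z)) := by
    rw [smul_sub, inv_smul_smul₀ (pow_ne_zero m ht0), neg_sub]
  calc dist (H z) ((t ^ m)⁻¹ • g (t • z))
      = (‖t‖ ^ m)⁻¹ * ‖g (t • z) - t ^ m • H z‖ := by
        rw [dist_eq_norm, hsub, norm_neg, norm_smul, norm_inv, norm_pow]
    _ ≤ (‖t‖ ^ m)⁻¹ * (|2 * C / r| * (‖t‖ * (‖c‖ + 1)) ^ (m + 1)) := by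
        refine mul_le_mul_of_nonneg_left ((hH z t (ht z hz)).trans ?_) (by positivity)
        rw [norm_smul]
        gcongr
        exacts [le_abs_self _, hnorm z hz]
    _ = ‖t‖ * (|2 * C / r| * (‖c‖ + 1) ^ (m + 1)) := by
        rw [mul_pow, pow_succ ‖t‖ m]
        field_simp
    _ < ε := htε

lemma exists_differentiable_norm_sub_le_pow {p : E → G} {r C : ℝ} (hr : 0 < r)
    (hp : DifferentiableOn ℂ p (ball 0 r)) (hC : ∀ z ∈ ball (0 : E) r, ‖p z‖ ≤ C) (m : ℕ) :
    ∃ q : E → G, Differentiable ℂ q ∧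
      ∀ z ∈ ball (0 : E) r, ‖p z - q z‖ ≤ C * (2 / r) ^ m * ‖z‖ ^ m := by
  induction m with
  | zero => exact ⟨0, differentiable_const _, by simpa using hC⟩
  | succ m ih =>
    obtain ⟨q, hq, hpq⟩ := ih
    obtain ⟨H, hH, hpqH⟩ :=
      exists_differentiable_norm_sub_le_pow_succ hr (hp.sub hq.differentiableOn) hpq
    refine ⟨q + H, hq.add hH, fun z hz => ?_⟩
    rw [Pi.add_apply, ← sub_sub]
    exact (hpqH z hz).trans_eq (by ring)

end EntireTruncation

/-! ### Near-identity maps -/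

section NearIdentity

variable {𝕜 E : Type*} [NontriviallyNormedField 𝕜] [NormedAddCommGroup E] [NormedSpace 𝕜 E]

lemma approximatesLinearOn_id_add {w : E → E} {s : Set E} {c : NNReal}
    (hw : LipschitzOnWith c w s) : ApproximatesLinearOn (fun z => z + w z)
      (ContinuousLinearEquiv.refl 𝕜 E : E →L[𝕜] E) s c := by
  refine ApproximatesLinearOn.approximatesLinearOn_iff_lipschitzOnWith.2 ?_
  convert hw using 1
  ext z
  simp

lemma exists_norm_le_two_mul_of_approximatesLinearOn_refl [CompleteSpace E] {f : E → E} {r : ℝ}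
    (h0 : f 0 = 0) (hf : ApproximatesLinearOn f (ContinuousLinearEquiv.refl 𝕜 E : E →L[𝕜] E)
      (ball 0 r) (1 / 2)) {z : E} (hz : z ∈ ball 0 (r / 2)) : ∃ x, ‖x‖ ≤ 2 * ‖z‖ ∧ f x = z := by
  rw [mem_ball_zero_iff] at hz
  let idInverse : (ContinuousLinearEquiv.refl 𝕜 E : E →L[𝕜] E).NonlinearRightInverse :=
    ⟨id, 1, by simp, by simp⟩
  have hsurj := hf.surjOn_closedBall_of_nonlinearRightInverse
    idInverse (ε := 2 * ‖z‖) (b := 0) (by positivity) (closedBall_subset_ball (by linarith))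
  have hz' : z ∈ closedBall (f 0) (((idInverse.nnnorm : ℝ)⁻¹ - (1 / 2 : NNReal)) * (2 * ‖z‖)) := by
    rw [h0, mem_closedBall_zero_iff]
    norm_num [idInverse]
    linarith
  obtain ⟨x, hx, hxz⟩ := hsurj hz'
  exact ⟨x, mem_closedBall_zero_iff.1 hx, hxz⟩

lemma exists_hasFDerivAt_equiv_id_add [CompleteSpace E] {w : E → E} {s : Set E} {x : E}
    (hs : s ∈ 𝓝 x) (hw : LipschitzOnWith (1 / 2) w s) (hwd : DifferentiableAt 𝕜 w x) :
    ∃ A : E ≃L[𝕜] E, HasFDerivAt (fun z => z + w z) (A : E →L[𝕜] E) x := by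
  have hnorm : ‖-fderiv 𝕜 w x‖ < 1 := by
    rw [norm_neg]
    exact (hwd.hasFDerivAt.le_of_lipschitzOn hs hw).trans_lt (by norm_num)
  refine ⟨ContinuousLinearEquiv.ofUnit (Units.oneSub _ hnorm), ?_⟩
  have hA : (ContinuousLinearEquiv.ofUnit (Units.oneSub _ hnorm) : E →L[𝕜] E) =
      ContinuousLinearMap.id 𝕜 E + fderiv 𝕜 w x := by
    change 1 - -fderiv 𝕜 w x = _
    rw [sub_neg_eq_add, ContinuousLinearMap.one_def]
  exact hA ▸ (hasFDerivAt_id x).add hwd.hasFDerivAt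

lemma exists_inverse_id_add [CompleteSpace E] {w : E → E} {r : ℝ} (h0 : w 0 = 0)
    (hwd : DifferentiableOn 𝕜 w (ball 0 r)) (hw : LipschitzOnWith (1 / 2) w (ball 0 r)) :
    ∃ κ : E → E, DifferentiableOn 𝕜 κ (ball 0 (r / 2)) ∧
      (∀ z ∈ ball (0 : E) (r / 2), ‖κ z‖ ≤ 2 * ‖z‖ ∧ κ z + w (κ z) = z) ∧
      ∀ x ∈ ball (0 : E) r, κ (x + w x) = x := by
  have hcontr : Subsingleton E ∨
      (1 / 2 : NNReal) < ‖((ContinuousLinearEquiv.refl 𝕜 E).symm : E →L[𝕜] E)‖₊⁻¹ := by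
    refine (subsingleton_or_nontrivial E).imp_right fun hE => ?_
    have := hE
    rw [ContinuousLinearEquiv.refl_symm, ContinuousLinearEquiv.coe_refl,
      ContinuousLinearMap.nnnorm_id, inv_one]
    exact one_half_lt_one
  have happrox := approximatesLinearOn_id_add (𝕜 := 𝕜) hw
  let e := happrox.toOpenPartialHomeomorph _ _ hcontr isOpen_ball
  have hleft (x : E) (hx : x ∈ ball 0 r) : e.symm (x + w x) = x := e.left_inv hx
  have hright (z : E) (hz : z ∈ ball 0 (r / 2)) :
      z ∈ e.target ∧ ‖e.symm z‖ ≤ 2 * ‖z‖ := by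
    obtain ⟨x, hxz, rfl⟩ := exists_norm_le_two_mul_of_approximatesLinearOn_refl
      (by simp [h0]) happrox hz
    have hx : x ∈ ball 0 r := by
      rw [mem_ball_zero_iff] at hz ⊢
      linarith
    exact ⟨e.map_source hx, (hleft x hx).symm ▸ hxz⟩
  refine ⟨e.symm, fun z hz => ?_, fun z hz => ⟨(hright z hz).2, e.right_inv (hright z hz).1⟩, hleft⟩
  have hmem := isOpen_ball.mem_nhds (e.map_target (hright z hz).1)
  obtain ⟨A, hA⟩ := exists_hasFDerivAt_equiv_id_add hmem hw (hwd.differentiableAt hmem)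
  exact (e.hasFDerivAt_symm (hright z hz).1 hA).differentiableAt.differentiableWithinAt

end NearIdentity

/-! ### The cohomological equation -/

section CohomologicalEquation

variable {X G : Type*} [NormedAddCommGroup G] [NormedSpace ℂ G]

/-- The `j`-th term `(λ_n ⋯ λ_{n+j})⁻¹ • φ_{n+j} ∘ F_{n+j-1} ∘ ⋯ ∘ F_n` of the formal solution of
the cohomological equation `λ_n • S_n = φ_n + S_{n+1} ∘ F_n`. -/
def cohomologicalTerm (lam : ℕ → ℂ) (φ : ℕ → X → G) (F : ℕ → X → X) : ℕ → ℕ → X → G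
  | 0, n, x => (lam n)⁻¹ • φ n x
  | j + 1, n, x => (lam n)⁻¹ • cohomologicalTerm lam φ F j (n + 1) (F n x)

/-- The formal solution `S_n` of the cohomological equation `λ_n • S_n = φ_n + S_{n+1} ∘ F_n`. -/
def cohomologicalSolution (lam : ℕ → ℂ) (φ : ℕ → X → G) (F : ℕ → X → X) (n : ℕ) (x : X) : G :=
  ∑' j, cohomologicalTerm lam φ F j n x

/-- A weight `W` on an invariant set `D` that dominates `φ` and is contracted by `F` faster than
`λ`; this makes the formal solution of the cohomological equation converge on `D`. -/
structure DominatingWeight (lam : ℕ → ℂ) (φ : ℕ → X → G) (F : ℕ → X → X) (D : Set X)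
    (W : X → ℝ) (a C θ : ℝ) : Prop where
  pos : 0 < a
  le_norm : ∀ n, a ≤ ‖lam n‖
  mapsTo : ∀ n, Set.MapsTo (F n) D D
  rate_nonneg : 0 ≤ θ
  rate_lt_one : θ < 1
  const_nonneg : 0 ≤ C
  weight_nonneg : ∀ x ∈ D, 0 ≤ W x
  weight_le : ∀ n, ∀ x ∈ D, W (F n x) ≤ θ * ‖lam n‖ * W x
  norm_le : ∀ n, ∀ x ∈ D, ‖φ n x‖ ≤ C * W x

namespace DominatingWeight

variable {lam : ℕ → ℂ} {φ : ℕ → X → G} {F : ℕ → X → X} {D : Set X} {W : X → ℝ} {a C θ : ℝ}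

lemma norm_term_le (h : DominatingWeight lam φ F D W a C θ) (j n : ℕ) {x : X} (hx : x ∈ D) :
    ‖cohomologicalTerm lam φ F j n x‖ ≤ C / a * W x * θ ^ j := by
  have ha := h.pos
  have hC := h.const_nonneg
  have hθ := h.rate_nonneg
  induction j generalizing n x with
  | zero =>
    have hW := h.weight_nonneg x hx
    calc ‖(lam n)⁻¹ • φ n x‖ = ‖φ n x‖ / ‖lam n‖ := by
          rw [norm_smul, norm_inv, inv_mul_eq_div]
      _ ≤ C * W x / a := div_le_div₀ (by positivity) (h.norm_le n x hx) ha (h.le_norm n)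
      _ = C / a * W x * θ ^ 0 := by ring
  | succ j ih =>
    rw [cohomologicalTerm, norm_smul, norm_inv, inv_mul_le_iff₀ (ha.trans_le (h.le_norm n))]
    calc ‖cohomologicalTerm lam φ F j (n + 1) (F n x)‖
        ≤ C / a * W (F n x) * θ ^ j := ih (n + 1) (h.mapsTo n hx)
      _ ≤ C / a * (θ * ‖lam n‖ * W x) * θ ^ j := by gcongr; exact h.weight_le n x hx
      _ = ‖lam n‖ * (C / a * W x * θ ^ (j + 1)) := by ring

lemma norm_solution_le (h : DominatingWeight lam φ F D W a C θ) (n : ℕ) {x : X} (hx : x ∈ D) :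
    ‖cohomologicalSolution lam φ F n x‖ ≤ C / a * (1 - θ)⁻¹ * W x :=
  (tsum_of_norm_bounded ((hasSum_geometric_of_lt_one h.rate_nonneg h.rate_lt_one).mul_left
    (C / a * W x)) fun j => h.norm_term_le j n hx).trans_eq (by ring)

variable [CompleteSpace G]

lemma summable_term (h : DominatingWeight lam φ F D W a C θ) (n : ℕ) {x : X} (hx : x ∈ D) :
    Summable fun j => cohomologicalTerm lam φ F j n x :=
  .of_norm_bounded ((summable_geometric_of_lt_one h.rate_nonneg h.rate_lt_one).mul_left
    (C / a * W x)) fun j => h.norm_term_le j n hx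

lemma smul_solution_eq (h : DominatingWeight lam φ F D W a C θ) (n : ℕ) {x : X} (hx : x ∈ D) :
    lam n • cohomologicalSolution lam φ F n x =
      φ n x + cohomologicalSolution lam φ F (n + 1) (F n x) := by
  have hlam : lam n ≠ 0 := norm_pos_iff.1 (h.pos.trans_le (h.le_norm n))
  simp only [cohomologicalSolution, (h.summable_term n hx).tsum_eq_zero_add, cohomologicalTerm,
    tsum_const_smul'' (lam n)⁻¹, smul_add, smul_inv_smul₀ hlam]

lemma differentiableOn_solution_comp {E X : Type*} [NormedAddCommGroup E] [NormedSpace ℂ E]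
    [NormedAddCommGroup X] [NormedSpace ℂ X] {φ : ℕ → X → G} {F : ℕ → X → X} {D : Set X}
    {W : X → ℝ} (h : DominatingWeight lam φ F D W a C θ) {K : ℝ} (hK : ∀ x ∈ D, W x ≤ K)
    (hF : ∀ n, DifferentiableOn ℂ (F n) D) (hφ : ∀ n, DifferentiableOn ℂ (φ n) D) {U : Set E}
    (hU : IsOpen U) {p : E → X} (hp : DifferentiableOn ℂ p U) (hpD : Set.MapsTo p U D) (n : ℕ) :
    DifferentiableOn ℂ (fun z => cohomologicalSolution lam φ F n (p z)) U := by
  have hterm (j n : ℕ) : DifferentiableOn ℂ (cohomologicalTerm lam φ F j n) D := by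
    induction j generalizing n with
    | zero => exact (hφ n).const_smul _
    | succ j ih => exact ((ih (n + 1)).comp (hF n) (h.mapsTo n)).const_smul _
  refine differentiableOn_tsum_of_summable hU (u := fun j => C / a * K * θ ^ j)
    ((summable_geometric_of_lt_one h.rate_nonneg h.rate_lt_one).mul_left _)
    (fun j => (hterm j n).comp hp hpD) fun j z hz => ?_
  have := hK _ (hpD hz)
  have hCa := div_nonneg h.const_nonneg h.pos.le
  have hθ := h.rate_nonneg
  exact (h.norm_term_le j n (hpD hz)).trans (by gcongr)

lemma solution_add_solution {F : ℕ → X → X} {φ : ℕ → X × X → G} {D : Set (X × X)} {W : X × X → ℝ}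
    (h : DominatingWeight lam φ (fun n => Prod.map (F n) (F n)) D W a C θ)
    (hφ : ∀ n x y z, φ n (x, y) + φ n (y, z) = φ n (x, z)) (n : ℕ) {x y z : X}
    (hxy : (x, y) ∈ D) (hyz : (y, z) ∈ D) :
    cohomologicalSolution lam φ (fun n => Prod.map (F n) (F n)) n (x, y) +
      cohomologicalSolution lam φ (fun n => Prod.map (F n) (F n)) n (y, z) =
      cohomologicalSolution lam φ (fun n => Prod.map (F n) (F n)) n (x, z) := by
  have hterm (j n : ℕ) (x y z : X) :
      cohomologicalTerm lam φ (fun n => Prod.map (F n) (F n)) j n (x, y) +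
        cohomologicalTerm lam φ (fun n => Prod.map (F n) (F n)) j n (y, z) =
        cohomologicalTerm lam φ (fun n => Prod.map (F n) (F n)) j n (x, z) := by
    induction j generalizing n x y z with
    | zero => simp only [cohomologicalTerm, ← smul_add, hφ]
    | succ j ih => simp only [cohomologicalTerm, Prod.map_apply, ← smul_add, ih]
  simp only [cohomologicalSolution]
  rw [← (h.summable_term n hxy).tsum_add (h.summable_term n hyz)]
  exact tsum_congr fun j => hterm j n x y z

end DominatingWeight

end CohomologicalEquation

lemma dominatingWeight_norm_pow {E G : Type*} [NormedAddCommGroup E] [NormedAddCommGroup G]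
    {lam : ℕ → ℂ} {φ : ℕ → E → G} {f : ℕ → E → E} {a θ C r : ℝ} {m : ℕ} (ha : 0 < a)
    (hlam : ∀ n, a ≤ ‖lam n‖)
    (hθ₀ : 0 ≤ θ) (hθ₁ : θ < 1) (hθa : θ ^ m ≤ a) (hC : 0 ≤ C)
    (hf : ∀ n, ∀ z ∈ ball (0 : E) r, ‖f n z‖ ≤ θ * ‖z‖)
    (hφ : ∀ n, ∀ z ∈ ball (0 : E) r, ‖φ n z‖ ≤ C * ‖z‖ ^ (m + 1)) :
    DominatingWeight lam φ f (ball 0 r) (fun z => ‖z‖ ^ (m + 1)) a C θ where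
  pos := ha
  le_norm := hlam
  mapsTo n z hz := by
    have := hf n z hz
    rw [mem_ball_zero_iff] at hz ⊢
    nlinarith [norm_nonneg z]
  rate_nonneg := hθ₀
  rate_lt_one := hθ₁
  const_nonneg := hC
  weight_nonneg z _ := by positivity
  weight_le n z hz := calc
    ‖f n z‖ ^ (m + 1) ≤ (θ * ‖z‖) ^ (m + 1) := by gcongr; exact hf n z hz
    _ = θ * θ ^ m * ‖z‖ ^ (m + 1) := by ring
    _ ≤ θ * ‖lam n‖ * ‖z‖ ^ (m + 1) := by gcongr; exact hθa.trans (hlam n)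
  norm_le := hφ

/-! ### Linearizing one coordinate of a fibered contraction -/

/-- Contractions `f_n` that permute the fibres of a projection `P`, together with a linear
functional `ℓ` vanishing on the range of `P` which along the fibres is `λ_n`-equivariant up to a
quadratic error. The condition `mul_rate_le` (`M_n` is the contraction rate of `f_n`, and `N_n` its
Lipschitz constant along the fibres) is the one under which this error can be summed away. -/
structure FiberedContraction {E : Type*} [NormedAddCommGroup E] [NormedSpace ℂ E] (P : E →L[ℂ] E)
    (ℓ : E →L[ℂ] ℂ) (lam : ℕ → ℂ) (f : ℕ → E → E) (r a θ C : ℝ) (M N : ℕ → ℝ) : Prop where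
  proj_proj : ∀ z, P (P z) = P z
  norm_proj_le : ∀ z, ‖P z‖ ≤ ‖z‖
  apply_proj : ∀ z, ℓ (P z) = 0
  radius_pos : 0 < r
  radius_le_one : r ≤ 1
  pos : 0 < a
  le_norm : ∀ n, a ≤ ‖lam n‖
  rate_lt_one : θ < 1
  const_nonneg : 0 ≤ C
  differentiableOn : ∀ n, DifferentiableOn ℂ (f n) (ball 0 r)
  contraction_nonneg : ∀ n, 0 ≤ M n
  contraction_le : ∀ n, M n ≤ θ
  norm_apply_le : ∀ n, ∀ z ∈ ball (0 : E) r, ‖f n z‖ ≤ M n * ‖z‖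
  proj_apply : ∀ n, ∀ z ∈ ball (0 : E) r, ∀ w ∈ ball (0 : E) r, P z = P w → P (f n z) = P (f n w)
  norm_apply_sub_le : ∀ n, ∀ z ∈ ball (0 : E) r, ∀ w ∈ ball (0 : E) r, P z = P w →
    ‖f n z - f n w‖ ≤ N n * ‖z - w‖
  mul_rate_le : ∀ n, M n * N n ≤ θ * ‖lam n‖
  norm_defect_le : ∀ n, ∀ z ∈ ball (0 : E) r, ∀ w ∈ ball (0 : E) r, P z = P w →
    ‖(ℓ (f n z) - lam n * ℓ z) - (ℓ (f n w) - lam n * ℓ w)‖ ≤ C * (max ‖z‖ ‖w‖ * ‖z - w‖)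

namespace FiberedContraction

variable {E : Type*} [NormedAddCommGroup E] [NormedSpace ℂ E]

/-- The failure of `z ↦ ℓ (f z) - c * ℓ z` to agree at two points. -/
def pairDefect (ℓ : E →L[ℂ] ℂ) (c : ℂ) (f : E → E) (x : E × E) : ℂ :=
  (ℓ (f x.1) - c * ℓ x.1) - (ℓ (f x.2) - c * ℓ x.2)

/-- The pairs of points of the ball of radius `r` lying in a common fibre of `P`. -/
def fibrePairs (P : E →L[ℂ] E) (r : ℝ) : Set (E × E) :=
  {x | x.1 ∈ ball 0 r ∧ x.2 ∈ ball 0 r ∧ P x.1 = P x.2}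

/-- The solution of the cohomological equation driven by `pairDefect`, for the maps `f_n` acting
on pairs of points. -/
def pairSolution (ℓ : E →L[ℂ] ℂ) (lam : ℕ → ℂ) (f : ℕ → E → E) : ℕ → E × E → ℂ :=
  cohomologicalSolution lam (fun n => pairDefect ℓ (lam n) (f n)) fun n => Prod.map (f n) (f n)

/-- The value of `pairSolution` at a point and its projection: adding it to `ℓ` makes `ℓ`
exactly `λ_n`-equivariant along the fibres of `P`. -/
def fibreCorrection (P : E →L[ℂ] E) (ℓ : E →L[ℂ] ℂ) (lam : ℕ → ℂ) (f : ℕ → E → E) (n : ℕ)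
    (z : E) : ℂ :=
  pairSolution ℓ lam f n (z, P z)

/-- The error term `ℓ (f_n z) + u_{n+1} (f_n z) - λ_n (ℓ z + u_n z)`, for `u` the
`fibreCorrection`; it depends on `P z` only. -/
def baseTerm (P : E →L[ℂ] E) (ℓ : E →L[ℂ] ℂ) (lam : ℕ → ℂ) (f : ℕ → E → E) (n : ℕ) (z : E) : ℂ :=
  ℓ (f n (P z)) + fibreCorrection P ℓ lam f (n + 1) (f n (P z))

variable {P : E →L[ℂ] E} {ℓ : E →L[ℂ] ℂ} {lam : ℕ → ℂ} {f : ℕ → E → E} {r a θ C : ℝ} {M N : ℕ → ℝ}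

lemma rate_nonneg (h : FiberedContraction P ℓ lam f r a θ C M N) : 0 ≤ θ :=
  (h.contraction_nonneg 0).trans (h.contraction_le 0)

lemma norm_apply_le_mul (h : FiberedContraction P ℓ lam f r a θ C M N) (n : ℕ) {z : E}
    (hz : z ∈ ball (0 : E) r) : ‖f n z‖ ≤ θ * ‖z‖ :=
  (h.norm_apply_le n z hz).trans (by gcongr; exact h.contraction_le n)

lemma mapsTo_ball (h : FiberedContraction P ℓ lam f r a θ C M N) (n : ℕ) :
    Set.MapsTo (f n) (ball 0 r) (ball 0 r) := by
  intro z hz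
  have := h.norm_apply_le_mul n hz
  have := h.rate_lt_one
  rw [mem_ball_zero_iff] at hz ⊢
  nlinarith [norm_nonneg z]

lemma proj_mem_ball (h : FiberedContraction P ℓ lam f r a θ C M N) {z : E}
    (hz : z ∈ ball (0 : E) r) : P z ∈ ball (0 : E) r :=
  mem_ball_zero_iff.2 ((h.norm_proj_le z).trans_lt (mem_ball_zero_iff.1 hz))

lemma mk_proj_mem_fibrePairs (h : FiberedContraction P ℓ lam f r a θ C M N) {z : E}
    (hz : z ∈ ball (0 : E) r) : (z, P z) ∈ fibrePairs P r :=
  ⟨hz, h.proj_mem_ball hz, (h.proj_proj z).symm⟩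

lemma mapsTo_fibrePairs (h : FiberedContraction P ℓ lam f r a θ C M N) (n : ℕ) :
    Set.MapsTo (Prod.map (f n) (f n)) (fibrePairs P r) (fibrePairs P r) :=
  fun x ⟨hx₁, hx₂, hP⟩ =>
    ⟨h.mapsTo_ball n hx₁, h.mapsTo_ball n hx₂, h.proj_apply n x.1 hx₁ x.2 hx₂ hP⟩

lemma dominatingWeight_pairs (h : FiberedContraction P ℓ lam f r a θ C M N) :
    DominatingWeight lam (fun n => pairDefect ℓ (lam n) (f n)) (fun n => Prod.map (f n) (f n))
      (fibrePairs P r) (fun x => max ‖x.1‖ ‖x.2‖ * ‖x.1 - x.2‖) a C θ where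
  pos := h.pos
  le_norm := h.le_norm
  mapsTo := h.mapsTo_fibrePairs
  rate_nonneg := h.rate_nonneg
  rate_lt_one := h.rate_lt_one
  const_nonneg := h.const_nonneg
  weight_nonneg x _ := by positivity
  weight_le n x hx := by
    have hM := h.contraction_nonneg n
    have hmax : max ‖f n x.1‖ ‖f n x.2‖ ≤ M n * max ‖x.1‖ ‖x.2‖ :=
      max_le ((h.norm_apply_le n _ hx.1).trans (by gcongr; exact le_max_left _ _))
        ((h.norm_apply_le n _ hx.2.1).trans (by gcongr; exact le_max_right _ _))
    calc max ‖f n x.1‖ ‖f n x.2‖ * ‖f n x.1 - f n x.2‖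
        ≤ (M n * max ‖x.1‖ ‖x.2‖) * (N n * ‖x.1 - x.2‖) :=
          mul_le_mul hmax (h.norm_apply_sub_le n _ hx.1 _ hx.2.1 hx.2.2) (norm_nonneg _)
            (by positivity)
      _ = M n * N n * (max ‖x.1‖ ‖x.2‖ * ‖x.1 - x.2‖) := by ring
      _ ≤ θ * ‖lam n‖ * (max ‖x.1‖ ‖x.2‖ * ‖x.1 - x.2‖) := by
          gcongr ?_ * _; exact h.mul_rate_le n
  norm_le n x hx := h.norm_defect_le n _ hx.1 _ hx.2.1 hx.2.2

lemma norm_fibreCorrection_le (h : FiberedContraction P ℓ lam f r a θ C M N) (n : ℕ) {z : E}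
    (hz : z ∈ ball (0 : E) r) :
    ‖fibreCorrection P ℓ lam f n z‖ ≤ 2 * (C / a * (1 - θ)⁻¹) * ‖z‖ ^ 2 := by
  have hK : 0 ≤ C / a * (1 - θ)⁻¹ := mul_nonneg (div_nonneg h.const_nonneg h.pos.le)
    (inv_nonneg.2 (sub_nonneg.2 h.rate_lt_one.le))
  have hP := h.norm_proj_le z
  calc ‖fibreCorrection P ℓ lam f n z‖
      ≤ C / a * (1 - θ)⁻¹ * (max ‖z‖ ‖P z‖ * ‖z - P z‖) :=
        h.dominatingWeight_pairs.norm_solution_le n (h.mk_proj_mem_fibrePairs hz)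
    _ ≤ C / a * (1 - θ)⁻¹ * (‖z‖ * (‖z‖ + ‖z‖)) := by
        gcongr
        · exact max_le le_rfl hP
        · exact (norm_sub_le _ _).trans (by gcongr)
    _ = 2 * (C / a * (1 - θ)⁻¹) * ‖z‖ ^ 2 := by ring

lemma differentiableOn_fibreCorrection (h : FiberedContraction P ℓ lam f r a θ C M N) (n : ℕ) :
    DifferentiableOn ℂ (fibreCorrection P ℓ lam f n) (ball 0 r) := by
  have hf₁ (n : ℕ) : DifferentiableOn ℂ (fun x : E × E => f n x.1) (fibrePairs P r) :=
    (h.differentiableOn n).comp differentiableOn_fst fun x hx => hx.1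
  have hf₂ (n : ℕ) : DifferentiableOn ℂ (fun x : E × E => f n x.2) (fibrePairs P r) :=
    (h.differentiableOn n).comp differentiableOn_snd fun x hx => hx.2.1
  have hweight : ∀ x ∈ fibrePairs P r, max ‖x.1‖ ‖x.2‖ * ‖x.1 - x.2‖ ≤ 1 * (1 + 1) := by
    intro x hx
    have hx₁ := (mem_ball_zero_iff.1 hx.1).le.trans h.radius_le_one
    have hx₂ := (mem_ball_zero_iff.1 hx.2.1).le.trans h.radius_le_one
    gcongr
    · exact max_le hx₁ hx₂
    · exact (norm_sub_le _ _).trans (by gcongr)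
  refine h.dominatingWeight_pairs.differentiableOn_solution_comp hweight
    (fun n => (hf₁ n).prodMk (hf₂ n)) (fun n => ?_) isOpen_ball
    (differentiableOn_id.prodMk P.differentiable.differentiableOn)
    (fun z hz => h.mk_proj_mem_fibrePairs hz) n
  have hℓ : Differentiable ℂ ℓ := ℓ.differentiable
  exact ((hℓ.comp_differentiableOn (hf₁ n)).sub
      ((hℓ.comp_differentiableOn differentiableOn_fst).const_mul _)).sub
    ((hℓ.comp_differentiableOn (hf₂ n)).sub
      ((hℓ.comp_differentiableOn differentiableOn_snd).const_mul _))

lemma apply_add_fibreCorrection (h : FiberedContraction P ℓ lam f r a θ C M N) (n : ℕ) {z : E}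
    (hz : z ∈ ball (0 : E) r) :
    ℓ (f n z) + fibreCorrection P ℓ lam f (n + 1) (f n z) =
      lam n * (ℓ z + fibreCorrection P ℓ lam f n z) + baseTerm P ℓ lam f n z := by
  have hzP := h.mk_proj_mem_fibrePairs hz
  have hfPz := h.mapsTo_ball n (h.proj_mem_ball hz)
  have hproj : P (f n z) = P (f n (P z)) :=
    h.proj_apply n z hz (P z) (h.proj_mem_ball hz) (h.proj_proj z).symm
  have hsol : lam n * fibreCorrection P ℓ lam f n z = pairDefect ℓ (lam n) (f n) (z, P z) +
      pairSolution ℓ lam f (n + 1) (f n z, f n (P z)) :=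
    h.dominatingWeight_pairs.smul_solution_eq n hzP
  have hcocycle : pairSolution ℓ lam f (n + 1) (f n z, f n (P z)) +
      pairSolution ℓ lam f (n + 1) (f n (P z), P (f n (P z))) =
      pairSolution ℓ lam f (n + 1) (f n z, P (f n (P z))) :=
    h.dominatingWeight_pairs.solution_add_solution (fun n x y z => by simp only [pairDefect]; ring)
      (n + 1) (h.mapsTo_fibrePairs n hzP) (h.mk_proj_mem_fibrePairs hfPz)
  simp only [fibreCorrection, baseTerm, pairDefect, hproj, h.apply_proj] at hsol ⊢
  linear_combination -hcocycle - hsol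

lemma baseTerm_proj (h : FiberedContraction P ℓ lam f r a θ C M N) (n : ℕ) (z : E) :
    baseTerm P ℓ lam f n (P z) = baseTerm P ℓ lam f n z := by
  simp only [baseTerm, h.proj_proj]

lemma differentiableOn_baseTerm (h : FiberedContraction P ℓ lam f r a θ C M N) (n : ℕ) :
    DifferentiableOn ℂ (baseTerm P ℓ lam f n) (ball 0 r) := by
  have hfP : DifferentiableOn ℂ (fun z => f n (P z)) (ball 0 r) :=
    (h.differentiableOn n).comp P.differentiable.differentiableOn fun z hz => h.proj_mem_ball hz
  exact (ℓ.differentiable.comp_differentiableOn hfP).add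
    ((h.differentiableOn_fibreCorrection (n + 1)).comp hfP
      fun z hz => h.mapsTo_ball n (h.proj_mem_ball hz))

lemma norm_baseTerm_le (h : FiberedContraction P ℓ lam f r a θ C M N) (n : ℕ) {z : E}
    (hz : z ∈ ball (0 : E) r) :
    ‖baseTerm P ℓ lam f n z‖ ≤ ‖ℓ‖ + 2 * (C / a * (1 - θ)⁻¹) := by
  have hK : 0 ≤ C / a * (1 - θ)⁻¹ := mul_nonneg (div_nonneg h.const_nonneg h.pos.le)
    (inv_nonneg.2 (sub_nonneg.2 h.rate_lt_one.le))
  have hfP := h.mapsTo_ball n (h.proj_mem_ball hz)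
  have hle := (mem_ball_zero_iff.1 hfP).le.trans h.radius_le_one
  calc ‖baseTerm P ℓ lam f n z‖
      ≤ ‖ℓ‖ * ‖f n (P z)‖ + 2 * (C / a * (1 - θ)⁻¹) * ‖f n (P z)‖ ^ 2 :=
        (norm_add_le _ _).trans (add_le_add (ℓ.le_opNorm _) (h.norm_fibreCorrection_le _ hfP))
    _ ≤ ‖ℓ‖ * 1 + 2 * (C / a * (1 - θ)⁻¹) * 1 ^ 2 := by gcongr
    _ = ‖ℓ‖ + 2 * (C / a * (1 - θ)⁻¹) := by ring

lemma exists_differentiable_norm_baseTerm_sub_le (h : FiberedContraction P ℓ lam f r a θ C M N)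
    (m : ℕ) : ∃ (q : ℕ → E → ℂ) (K : ℝ), 0 ≤ K ∧ (∀ n, Differentiable ℂ (q n)) ∧
      ∀ n, ∀ z ∈ ball (0 : E) r, ‖baseTerm P ℓ lam f n z - q n (P z)‖ ≤ K * ‖z‖ ^ m := by
  choose q hqd hq using fun n => exists_differentiable_norm_sub_le_pow h.radius_pos
    (h.differentiableOn_baseTerm n) (fun z hz => h.norm_baseTerm_le n hz) m
  have hr := h.radius_pos
  have hK := (norm_nonneg _).trans (h.norm_baseTerm_le 0 (mem_ball_self hr))
  refine ⟨q, (‖ℓ‖ + 2 * (C / a * (1 - θ)⁻¹)) * (2 / r) ^ m, by positivity, hqd, fun n z hz => ?_⟩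
  rw [← h.baseTerm_proj]
  refine (hq n _ (h.proj_mem_ball hz)).trans ?_
  gcongr
  exact h.norm_proj_le z

/- The error left by `fibreCorrection` is a function of `P z`. Its Taylor polynomial of a degree so
large that `‖z‖ ^ degree` decays faster than `λ` becomes `q`; the remainder is summed away. -/
theorem exists_quadratic_correction (h : FiberedContraction P ℓ lam f r a θ C M N) :
    ∃ (w q : ℕ → E → ℂ) (K : ℝ), 0 ≤ K ∧ ∀ n,
      DifferentiableOn ℂ (w n) (ball 0 r) ∧ (∀ z ∈ ball (0 : E) r, ‖w n z‖ ≤ K * ‖z‖ ^ 2) ∧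
      Differentiable ℂ (q n) ∧ ∀ z ∈ ball (0 : E) r,
        ℓ (f n z) + w (n + 1) (f n z) = lam n * (ℓ z + w n z) + q n (P z) := by
  obtain ⟨m, hm⟩ := exists_pow_lt_of_lt_one h.pos h.rate_lt_one
  have hm' : θ ^ (m + 1) ≤ a :=
    (pow_le_pow_of_le_one h.rate_nonneg h.rate_lt_one.le m.le_succ).trans hm.le
  obtain ⟨q, K, hK, hqd, hq⟩ := h.exists_differentiable_norm_baseTerm_sub_le (m + 1 + 1)
  let φ (n : ℕ) (z : E) : ℂ := baseTerm P ℓ lam f n z - q n (P z)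
  let V := cohomologicalSolution lam φ f
  have hW : DominatingWeight lam φ f (ball 0 r) (fun z => ‖z‖ ^ (m + 1 + 1)) a K θ :=
    dominatingWeight_norm_pow h.pos h.le_norm h.rate_nonneg h.rate_lt_one hm' hK
      (fun n z hz => h.norm_apply_le_mul n hz) hq
  have hle {z : E} (hz : z ∈ ball (0 : E) r) : ‖z‖ ≤ 1 :=
    (mem_ball_zero_iff.1 hz).le.trans h.radius_le_one
  have hVd (n : ℕ) : DifferentiableOn ℂ (V n) (ball 0 r) :=
    hW.differentiableOn_solution_comp (fun z hz => pow_le_one₀ (norm_nonneg z) (hle hz))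
      h.differentiableOn
      (fun n => (h.differentiableOn_baseTerm n).sub
        ((hqd n).comp P.differentiable).differentiableOn)
      isOpen_ball differentiableOn_id (Set.mapsTo_id _) n
  have hθ : 0 ≤ (1 - θ)⁻¹ := inv_nonneg.2 (sub_nonneg.2 h.rate_lt_one.le)
  have ha := h.pos
  have hC := h.const_nonneg
  refine ⟨fun n z => fibreCorrection P ℓ lam f n z + V n z, q,
    2 * (C / a * (1 - θ)⁻¹) + K / a * (1 - θ)⁻¹, by positivity, fun n =>
    ⟨(h.differentiableOn_fibreCorrection n).add (hVd n), fun z hz => ?_, hqd n, fun z hz => ?_⟩⟩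
  · rw [add_mul]
    refine (norm_add_le _ _).trans (add_le_add (h.norm_fibreCorrection_le n hz) ?_)
    refine (hW.norm_solution_le n hz).trans ?_
    gcongr ?_ * ?_
    exact pow_le_pow_of_le_one (norm_nonneg z) (hle hz) (by lia)
  · have hV : lam n * V n z = φ n z + V (n + 1) (f n z) := hW.smul_solution_eq n hz
    linear_combination h.apply_add_fibreCorrection n hz - hV

end FiberedContraction

/-! ### Local conjugacy of sequences of maps -/

section LocalConjugacy

variable {E F G : Type*} [NormedAddCommGroup E] [NormedSpace ℂ E] [NormedAddCommGroup F]
  [NormedSpace ℂ F] [NormedAddCommGroup G] [NormedSpace ℂ G]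

/-- Holomorphic maps `h_n` on the ball of radius `r` that carry `f_n` to `g_n`, in the sense that
`h_{n+1} ∘ f_n = g_n ∘ h_n`, are Lipschitz at `0` with constant `C`, and have left inverses
`k_n`. -/
structure LocalConjugation (f : ℕ → E → E) (g : ℕ → F → F) (r C : ℝ) (h : ℕ → E → F)
    (k : ℕ → F → E) : Prop where
  differentiableOn : ∀ n, DifferentiableOn ℂ (h n) (ball 0 r)
  norm_le : ∀ n, ∀ z ∈ ball (0 : E) r, ‖h n z‖ ≤ C * ‖z‖
  left_inv : ∀ n, ∀ z ∈ ball (0 : E) r, k n (h n z) = z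
  semiconj : ∀ n, ∀ z ∈ ball (0 : E) r, h (n + 1) (f n z) = g n (h n z)

/-- The sequences `f` and `g` are conjugate near the origin by holomorphic maps with holomorphic
inverses, all defined on balls of a common radius and Lipschitz at `0` with a common constant. -/
def LocallyConjugate (f : ℕ → E → E) (g : ℕ → F → F) : Prop :=
  ∃ (r C : ℝ) (h : ℕ → E → F) (k : ℕ → F → E), 0 < r ∧ 1 ≤ C ∧
    LocalConjugation f g r C h k ∧ LocalConjugation g f r C k h

lemma LocalConjugation.trans {f : ℕ → E → E} {g : ℕ → F → F} {p : ℕ → G → G} {r C r' C' ρ : ℝ}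
    {h : ℕ → E → F} {k : ℕ → F → E} {h' : ℕ → F → G} {k' : ℕ → G → F}
    (H : LocalConjugation f g r C h k) (H' : LocalConjugation g p r' C' h' k') (hC : 0 < C)
    (hC' : 0 ≤ C') (hρ : ρ ≤ r) (hρ' : C * ρ ≤ r') :
    LocalConjugation f p ρ (C' * C) (fun n => h' n ∘ h n) (fun n => k n ∘ k' n) := by
  have hsub : ball (0 : E) ρ ⊆ ball 0 r := ball_subset_ball hρ
  have hmaps (n : ℕ) : Set.MapsTo (h n) (ball 0 ρ) (ball 0 r') := by
    intro z hz
    have hhz := H.norm_le n z (hsub hz)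
    rw [mem_ball_zero_iff] at hz ⊢
    nlinarith
  refine ⟨fun n => (H'.differentiableOn n).comp ((H.differentiableOn n).mono hsub) (hmaps n),
    fun n z hz => ?_, fun n z hz => ?_, fun n z hz => ?_⟩
  · calc ‖h' n (h n z)‖ ≤ C' * ‖h n z‖ := H'.norm_le n _ (hmaps n hz)
      _ ≤ C' * (C * ‖z‖) := by gcongr; exact H.norm_le n z (hsub hz)
      _ = C' * C * ‖z‖ := by ring
  · simp only [Function.comp_apply, H'.left_inv n _ (hmaps n hz), H.left_inv n z (hsub hz)]
  · simp only [Function.comp_apply, H.semiconj n z (hsub hz), H'.semiconj n _ (hmaps n hz)]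

namespace LocallyConjugate

lemma of_eqOn_ball {f g : ℕ → E → E} {r : ℝ} (hr : 0 < r)
    (hfg : ∀ n, Set.EqOn (f n) (g n) (ball 0 r)) : LocallyConjugate f g :=
  ⟨r, 1, fun _ => id, fun _ => id, hr, le_rfl,
    ⟨fun _ => differentiableOn_id, fun _ z _ => (one_mul ‖z‖).ge, fun _ _ _ => rfl, hfg⟩,
    ⟨fun _ => differentiableOn_id, fun _ z _ => (one_mul ‖z‖).ge, fun _ _ _ => rfl,
      fun n => (hfg n).symm⟩⟩

lemma of_continuousLinearEquiv (f : ℕ → E → E) (T : E ≃L[ℂ] F) :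
    LocallyConjugate f fun n w => T (f n (T.symm w)) := by
  refine ⟨1, max 1 (max ‖(T : E →L[ℂ] F)‖ ‖(T.symm : F →L[ℂ] E)‖), fun _ => T, fun _ => T.symm,
    one_pos, le_max_left _ _, ⟨fun _ => T.differentiable.differentiableOn, fun _ z _ => ?_,
      fun _ z _ => T.symm_apply_apply z, fun n z _ => by simp only [T.symm_apply_apply]⟩,
    ⟨fun _ => T.symm.differentiable.differentiableOn, fun _ z _ => ?_,
      fun _ z _ => T.apply_symm_apply z, fun n z _ => T.symm_apply_apply _⟩⟩
  · exact (T : E →L[ℂ] F).le_of_opNorm_le ((le_max_left _ _).trans (le_max_right _ _)) z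
  · exact (T.symm : F →L[ℂ] E).le_of_opNorm_le ((le_max_right _ _).trans (le_max_right _ _)) z

lemma trans {f : ℕ → E → E} {g : ℕ → F → F} {p : ℕ → G → G} (hfg : LocallyConjugate f g)
    (hgp : LocallyConjugate g p) : LocallyConjugate f p := by
  obtain ⟨r, C, h, k, hr, hC, hh, hk⟩ := hfg
  obtain ⟨r', C', h', k', hr', hC', hh', hk'⟩ := hgp
  have hC₀ : 0 < C := by positivity
  have hC₀' : 0 < C' := by positivity
  have hρ : C' * min (r / C') (r' / C) ≤ r := by
    rw [← le_div_iff₀' hC₀']; exact min_le_left _ _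
  have hρ' : C * min (r / C') (r' / C) ≤ r' := by
    rw [← le_div_iff₀' hC₀]; exact min_le_right _ _
  refine ⟨min (r / C') (r' / C), C' * C, fun n => h' n ∘ h n, fun n => k n ∘ k' n, by positivity,
    one_le_mul_of_one_le_of_one_le hC' hC, hh.trans hh' hC₀ hC₀'.le ?_ hρ', ?_⟩
  · exact (min_le_left _ _).trans (div_le_self hr.le hC')
  · rw [mul_comm]
    exact hk'.trans hk hC₀' hC₀.le ((min_le_right _ _).trans (div_le_self hr'.le hC)) hρ

end LocallyConjugate

end LocalConjugacy

/-! ### Sequences of germs and near-identity changes of coordinates -/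

section UniformGerm

variable {E : Type*} [NormedAddCommGroup E] [NormedSpace ℂ E]

/-- The maps `f_n` are holomorphic on a common ball, fix the origin, and have linear parts `L_n`
with uniformly quadratic remainders `f_n - L_n`, in Lipschitz form. -/
structure UniformGerm (L : ℕ → E →L[ℂ] E) (f : ℕ → E → E) (r K : ℝ) : Prop where
  radius_pos : 0 < r
  const_nonneg : 0 ≤ K
  differentiableOn : ∀ n, DifferentiableOn ℂ (f n) (ball 0 r)
  map_zero : ∀ n, f n 0 = 0
  norm_remainder_sub_le : ∀ n, ∀ z ∈ ball (0 : E) r, ∀ w ∈ ball (0 : E) r,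
    ‖(f n z - L n z) - (f n w - L n w)‖ ≤ K * (max ‖z‖ ‖w‖ * ‖z - w‖)

namespace UniformGerm

variable {L : ℕ → E →L[ℂ] E} {f : ℕ → E → E} {r K : ℝ}

lemma of_norm_le {C : ℝ} (hr : 0 < r) (hd : ∀ n, DifferentiableOn ℂ (f n) (ball 0 r))
    (h0 : ∀ n, f n 0 = 0) (hL : ∀ n, HasFDerivAt (f n) (L n) 0)
    (hC : ∀ n, ∀ z ∈ ball (0 : E) r, ‖f n z‖ ≤ C) :
    UniformGerm L f (r / 2) (8 * (3 * C / r ^ 2)) := by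
  have hC₀ : 0 ≤ C := (norm_nonneg _).trans (hC 0 0 (mem_ball_self hr))
  refine ⟨by positivity, by positivity,
    fun n => (hd n).mono (ball_subset_ball (half_le_self hr.le)), h0, fun n z hz w hw => ?_⟩
  rw [← mul_assoc]
  exact norm_sub_le_of_norm_le_sq (g := fun z => f n z - L n z)
    ((hd n).sub (L n).differentiable.differentiableOn) (by positivity)
    (fun z hz => norm_sub_fderiv_le_sq (hd n) (h0 n) (hL n) (hC n) hz) hz hw

lemma mono (h : UniformGerm L f r K) {ρ : ℝ} (hρ : 0 < ρ) (hle : ρ ≤ r) : UniformGerm L f ρ K :=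
  have hsub := ball_subset_ball (x := (0 : E)) hle
  ⟨hρ, h.const_nonneg, fun n => (h.differentiableOn n).mono hsub, h.map_zero,
    fun n z hz w hw => h.norm_remainder_sub_le n z (hsub hz) w (hsub hw)⟩

lemma norm_remainder_le (h : UniformGerm L f r K) (n : ℕ) {z : E} (hz : z ∈ ball (0 : E) r) :
    ‖f n z - L n z‖ ≤ K * ‖z‖ ^ 2 := by
  simpa only [h.map_zero, _root_.map_zero, sub_zero, norm_zero, max_eq_left (norm_nonneg z), sq]
    using h.norm_remainder_sub_le n z hz 0 (mem_ball_self h.radius_pos)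

lemma hasFDerivAt (h : UniformGerm L f r K) (n : ℕ) : HasFDerivAt (f n) (L n) 0 :=
  hasFDerivAt_zero_of_norm_sub_le_sq h.radius_pos fun _ hz => h.norm_remainder_le n hz

lemma norm_remainder_sub_le_mul (h : UniformGerm L f r K) {η : ℝ} (hη : K * r ≤ η) (n : ℕ) {z w : E}
    (hz : z ∈ ball (0 : E) r) (hw : w ∈ ball (0 : E) r) :
    ‖(f n z - L n z) - (f n w - L n w)‖ ≤ η * ‖z - w‖ := by
  have hK := h.const_nonneg
  have hmax : max ‖z‖ ‖w‖ ≤ r := max_le (mem_ball_zero_iff.1 hz).le (mem_ball_zero_iff.1 hw).le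
  calc ‖(f n z - L n z) - (f n w - L n w)‖ ≤ K * (max ‖z‖ ‖w‖ * ‖z - w‖) :=
        h.norm_remainder_sub_le n z hz w hw
    _ ≤ K * (r * ‖z - w‖) := by gcongr
    _ = K * r * ‖z - w‖ := by ring
    _ ≤ η * ‖z - w‖ := by gcongr

lemma norm_apply_sub_le (h : UniformGerm L f r K) {η N : ℝ} (hη : K * r ≤ η) (n : ℕ) {z w : E}
    (hz : z ∈ ball (0 : E) r) (hw : w ∈ ball (0 : E) r) (hN : ‖L n (z - w)‖ ≤ N * ‖z - w‖) :
    ‖f n z - f n w‖ ≤ (N + η) * ‖z - w‖ := by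
  have hsplit : f n z - f n w = L n (z - w) + ((f n z - L n z) - (f n w - L n w)) := by
    rw [map_sub]; abel
  rw [hsplit, add_mul]
  exact (norm_add_le _ _).trans (add_le_add hN (h.norm_remainder_sub_le_mul hη n hz hw))

lemma norm_apply_le (h : UniformGerm L f r K) {η M : ℝ} (hη : K * r ≤ η) (n : ℕ) {z : E}
    (hz : z ∈ ball (0 : E) r) (hM : ‖L n z‖ ≤ M * ‖z‖) : ‖f n z‖ ≤ (M + η) * ‖z‖ := by
  simpa only [h.map_zero, sub_zero] using
    h.norm_apply_sub_le hη n hz (mem_ball_self h.radius_pos) (by simpa only [sub_zero] using hM)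

end UniformGerm

/-- The maps `z ↦ z + W_n z`, with `W_n` uniformly quadratically small, have holomorphic inverses
`κ_n` on a common ball. -/
structure NearIdentityChart (W κ : ℕ → E → E) (ρ K : ℝ) : Prop where
  radius_pos : 0 < ρ
  differentiableOn : ∀ n, DifferentiableOn ℂ (W n) (ball 0 ρ)
  norm_le_sq : ∀ n, ∀ z ∈ ball (0 : E) ρ, ‖W n z‖ ≤ K * ‖z‖ ^ 2
  norm_le : ∀ n, ∀ z ∈ ball (0 : E) ρ, ‖W n z‖ ≤ ‖z‖
  inv_id_add : ∀ n, ∀ z ∈ ball (0 : E) ρ, κ n (z + W n z) = z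
  differentiableOn_inv : ∀ n, DifferentiableOn ℂ (κ n) (ball 0 (ρ / 2))
  norm_inv_le : ∀ n, ∀ z ∈ ball (0 : E) (ρ / 2), ‖κ n z‖ ≤ 2 * ‖z‖
  inv_add : ∀ n, ∀ z ∈ ball (0 : E) (ρ / 2), κ n z + W n (κ n z) = z

lemma exists_nearIdentityChart [CompleteSpace E] {W : ℕ → E → E} {r K : ℝ} (hr : 0 < r)
    (hK : 0 ≤ K) (hd : ∀ n, DifferentiableOn ℂ (W n) (ball 0 r))
    (hW : ∀ n, ∀ z ∈ ball (0 : E) r, ‖W n z‖ ≤ K * ‖z‖ ^ 2) :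
    ∃ κ ρ, ρ ≤ r ∧ NearIdentityChart W κ ρ K := by
  set ρ := min (r / 2) (1 / (16 * (K + 1)))
  have hρ : 0 < ρ := by positivity
  have hρr : ρ ≤ r / 2 := min_le_left _ _
  have hKρ : 8 * K * ρ ≤ 1 / 2 := calc
    8 * K * ρ ≤ 8 * (K + 1) * (1 / (16 * (K + 1))) := by
      gcongr
      exacts [by linarith, min_le_right _ _]
    _ = 1 / 2 := by field_simp; norm_num
  have hsub : ball (0 : E) ρ ⊆ ball 0 r := ball_subset_ball (hρr.trans (half_le_self hr.le))
  have hlip (n : ℕ) : LipschitzOnWith (1 / 2) (W n) (ball 0 ρ) := by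
    refine .of_dist_le_mul fun z hz w hw => ?_
    have hmax : max ‖z‖ ‖w‖ ≤ ρ := max_le (mem_ball_zero_iff.1 hz).le (mem_ball_zero_iff.1 hw).le
    rw [dist_eq_norm, dist_eq_norm]
    calc ‖W n z - W n w‖ ≤ 8 * K * max ‖z‖ ‖w‖ * ‖z - w‖ :=
          norm_sub_le_of_norm_le_sq (hd n) hK (hW n) (ball_subset_ball hρr hz)
            (ball_subset_ball hρr hw)
      _ ≤ 8 * K * ρ * ‖z - w‖ := by gcongr
      _ ≤ 1 / 2 * ‖z - w‖ := by gcongr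
  have hW0 (n : ℕ) : W n 0 = 0 := by simpa using hW n 0 (mem_ball_self hr)
  choose κ hκd hκ hκW using fun n =>
    exists_inverse_id_add (hW0 n) ((hd n).mono hsub) (hlip n)
  refine ⟨κ, ρ, hρr.trans (half_le_self hr.le), hρ, fun n => (hd n).mono hsub,
    fun n z hz => hW n z (hsub hz), fun n z hz => ?_, hκW, hκd, fun n z hz => (hκ n z hz).1,
    fun n z hz => (hκ n z hz).2⟩
  have := (hlip n).norm_sub_le hz (mem_ball_self hρ)
  rw [hW0, sub_zero, sub_zero] at this
  exact this.trans (mul_le_of_le_one_left (norm_nonneg z) (by norm_num))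

/-- The sequence `f` in the coordinates `z + W_n z`, where `κ_n` is the inverse of `z + W_n z`. -/
def conjugateIdAdd (W κ f : ℕ → E → E) (n : ℕ) (z : E) : E :=
  f n (κ n z) + W (n + 1) (f n (κ n z))

namespace NearIdentityChart

variable {W κ f : ℕ → E → E} {L : ℕ → E →L[ℂ] E} {ρ K K' : ℝ}

lemma map_zero (h : NearIdentityChart W κ ρ K) (n : ℕ) : W n 0 = 0 := by
  simpa using h.norm_le n 0 (mem_ball_self h.radius_pos)

lemma inv_zero (h : NearIdentityChart W κ ρ K) (n : ℕ) : κ n 0 = 0 := by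
  simpa using h.norm_inv_le n 0 (mem_ball_self (half_pos h.radius_pos))

lemma inv_mem_ball (h : NearIdentityChart W κ ρ K) (n : ℕ) {z : E} (hz : z ∈ ball (0 : E) (ρ / 2)) :
    κ n z ∈ ball (0 : E) ρ := by
  have := h.norm_inv_le n z hz
  rw [mem_ball_zero_iff] at hz ⊢
  linarith

lemma norm_id_add_le (h : NearIdentityChart W κ ρ K) (n : ℕ) {z : E} (hz : z ∈ ball (0 : E) ρ) :
    ‖z + W n z‖ ≤ 2 * ‖z‖ :=
  (norm_add_le _ _).trans (by linarith [h.norm_le n z hz])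

lemma differentiableOn_id_add (h : NearIdentityChart W κ ρ K) (n : ℕ) :
    DifferentiableOn ℂ (fun z => z + W n z) (ball 0 ρ) :=
  differentiableOn_id.add (h.differentiableOn n)

lemma apply_inv_mem_ball (h : NearIdentityChart W κ ρ K)
    (hf : ∀ n, ∀ z ∈ ball (0 : E) ρ, ‖f n z‖ ≤ ‖z‖) (n : ℕ) {z : E}
    (hz : z ∈ ball (0 : E) (ρ / 2)) : f n (κ n z) ∈ ball (0 : E) ρ :=
  mem_ball_zero_iff.2 ((hf n _ (h.inv_mem_ball n hz)).trans_lt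
    (mem_ball_zero_iff.1 (h.inv_mem_ball n hz)))

lemma locallyConjugate (h : NearIdentityChart W κ ρ K)
    (hf : ∀ n, ∀ z ∈ ball (0 : E) ρ, ‖f n z‖ ≤ ‖z‖) :
    LocallyConjugate f (conjugateIdAdd W κ f) := by
  have hsub : ball (0 : E) (ρ / 2) ⊆ ball 0 ρ := ball_subset_ball (half_le_self h.radius_pos.le)
  refine ⟨ρ / 2, 2, fun n z => z + W n z, κ, half_pos h.radius_pos, one_le_two,
    ⟨fun n => (h.differentiableOn_id_add n).mono hsub, fun n z hz => h.norm_id_add_le n (hsub hz),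
      fun n z hz => h.inv_id_add n z (hsub hz), fun n z hz => ?_⟩,
    ⟨h.differentiableOn_inv, h.norm_inv_le, h.inv_add,
      fun n z hz => h.inv_id_add _ _ (h.apply_inv_mem_ball hf n hz)⟩⟩
  simp only [conjugateIdAdd, h.inv_id_add n z (hsub hz)]

lemma hasFDerivAt_id_add (h : NearIdentityChart W κ ρ K) (n : ℕ) :
    HasFDerivAt (fun z => z + W n z) (.id ℂ E) 0 := by
  refine hasFDerivAt_zero_of_norm_sub_le_sq h.radius_pos (C := K) fun z hz => ?_
  simpa using h.norm_le_sq n z hz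

lemma hasFDerivAt_inv (h : NearIdentityChart W κ ρ K) (hK : 0 ≤ K) (n : ℕ) :
    HasFDerivAt (κ n) (.id ℂ E) 0 := by
  refine hasFDerivAt_zero_of_norm_sub_le_sq (half_pos h.radius_pos) (C := 4 * K) fun z hz => ?_
  have hsub : κ n z - z = -W n (κ n z) := by
    rw [sub_eq_iff_eq_add, neg_add_eq_sub, eq_sub_iff_add_eq, h.inv_add n z hz]
  calc ‖κ n z - z‖ = ‖W n (κ n z)‖ := by rw [hsub, norm_neg]
    _ ≤ K * ‖κ n z‖ ^ 2 := h.norm_le_sq n _ (h.inv_mem_ball n hz)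
    _ ≤ K * (2 * ‖z‖) ^ 2 := by gcongr; exact h.norm_inv_le n z hz
    _ = 4 * K * ‖z‖ ^ 2 := by ring

lemma exists_uniformGerm_conjugateIdAdd (h : NearIdentityChart W κ ρ K) (hK : 0 ≤ K)
    (hg : UniformGerm L f ρ K') (hf : ∀ n, ∀ z ∈ ball (0 : E) ρ, ‖f n z‖ ≤ ‖z‖) :
    ∃ K'', UniformGerm L (conjugateIdAdd W κ f) (ρ / 2 / 2) K'' := by
  refine ⟨_, .of_norm_le (C := 2 * ρ) (half_pos h.radius_pos) (fun n => ?_) (fun n => ?_)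
    (fun n => ?_) fun n z hz => ?_⟩
  · exact (h.differentiableOn_id_add (n + 1)).comp
      ((hg.differentiableOn n).comp (h.differentiableOn_inv n) fun z hz => h.inv_mem_ball n hz)
      fun z hz => h.apply_inv_mem_ball hf n hz
  · simp only [conjugateIdAdd, h.inv_zero, hg.map_zero, h.map_zero, add_zero]
  · have hfκ : HasFDerivAt (fun z => f n (κ n z)) (L n) 0 :=
      HasFDerivAt.comp 0 (by rw [h.inv_zero]; exact hg.hasFDerivAt n) (h.hasFDerivAt_inv hK n)
    have hid : HasFDerivAt (fun z => z + W (n + 1) z) (.id ℂ E) (f n (κ n 0)) := by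
      rw [h.inv_zero, hg.map_zero]; exact h.hasFDerivAt_id_add (n + 1)
    exact hid.comp 0 hfκ
  · have hfκ := h.apply_inv_mem_ball hf n hz
    refine (h.norm_id_add_le (n + 1) hfκ).trans ?_
    gcongr
    exact (mem_ball_zero_iff.1 hfκ).le

end NearIdentityChart

end UniformGerm

/-! ### The triangular normal form -/

section NormalForm

variable {ι : Type*} [LinearOrder ι]

/-- The projection of `ι → ℂ` that keeps the coordinates below `i` and kills all others. -/
def lowerProj (i : ι) : (ι → ℂ) →L[ℂ] (ι → ℂ) :=
  .pi fun j => if j < i then .proj j else 0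

lemma lowerProj_apply (i j : ι) (z : ι → ℂ) : lowerProj i z j = if j < i then z j else 0 := by
  simp only [lowerProj, ContinuousLinearMap.coe_pi']
  split_ifs <;> rfl

lemma lowerProj_apply_self (i : ι) (z : ι → ℂ) : lowerProj i z i = 0 := by
  rw [lowerProj_apply, if_neg (lt_irrefl i)]

lemma lowerProj_eq_iff {i : ι} {z w : ι → ℂ} :
    lowerProj i z = lowerProj i w ↔ ∀ j < i, z j = w j := by
  simp only [funext_iff, lowerProj_apply]
  exact forall_congr' fun j => by split_ifs with hj <;> simp [hj]

lemma lowerProj_lowerProj (i : ι) (z : ι → ℂ) : lowerProj i (lowerProj i z) = lowerProj i z :=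
  lowerProj_eq_iff.2 fun j hj => by rw [lowerProj_apply, if_pos hj]

/-- The map of `ι → ℂ` whose `j`-th component is affine in `z_j` with linear coefficient `λ_j` and
depends otherwise only on the coordinates below `j`. -/
def triangularMap (lam : ι → ℂ) (q : ι → (ι → ℂ) → ℂ) (z : ι → ℂ) (j : ι) : ℂ :=
  lam j * z j + q j (lowerProj j z)

lemma triangularMap_congr {lam : ι → ℂ} {q q' : ι → (ι → ℂ) → ℂ} {z w : ι → ℂ} {j : ι}
    (hq : q j = q' j) (hzw : ∀ l ≤ j, z l = w l) :
    triangularMap lam q z j = triangularMap lam q' w j := by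
  rw [triangularMap, triangularMap, hq, hzw j le_rfl, lowerProj_eq_iff.2 fun l hl => hzw l hl.le]

variable [Fintype ι]

lemma norm_lowerProj_le (i : ι) (z : ι → ℂ) : ‖lowerProj i z‖ ≤ ‖z‖ := by
  refine (pi_norm_le_iff_of_nonneg (norm_nonneg z)).2 fun j => ?_
  rw [lowerProj_apply]
  split_ifs
  · exact norm_le_pi_norm z j
  · exact norm_zero.trans_le (norm_nonneg z)

/-- The linear maps `L_n` are lower triangular with diagonal entries `λ_{n,i}`, bounded by `M_n`
and, on the subspace where the coordinates below `i` vanish, by `N_{n,i}`. These bounds are such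
that, with a margin `η`, the `L_n` contract at rate `θ` and the quadratic errors in coordinate `i`
decay at rate `θ` relative to `λ_{n,i}`. -/
structure TriangularDomination (L : ℕ → (ι → ℂ) →L[ℂ] (ι → ℂ)) (lam : ℕ → ι → ℂ) (a θ η : ℝ)
    (M : ℕ → ℝ) (N : ℕ → ι → ℝ) : Prop where
  pos : 0 < a
  rate_lt_one : θ < 1
  margin_pos : 0 < η
  bound_nonneg : ∀ n, 0 ≤ M n
  bound_add_le : ∀ n, M n + η ≤ θ
  norm_apply_le : ∀ n z, ‖L n z‖ ≤ M n * ‖z‖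
  le_norm : ∀ n i, a ≤ ‖lam n i‖
  mul_bound_le : ∀ n i, (M n + η) * (N n i + η) ≤ θ * ‖lam n i‖
  norm_apply_le_of_lower : ∀ n i z, (∀ l < i, z l = 0) → ‖L n z‖ ≤ N n i * ‖z‖
  apply_of_lower : ∀ n i z, (∀ l < i, z l = 0) → L n z i = lam n i * z i

/-- Near the origin, the components of the maps `f_n` with index in `s` are those of
`triangularMap λ_n q_n`, with `q_n` entire. -/
structure TriangularOn (s : Set ι) (lam : ℕ → ι → ℂ) (f : ℕ → (ι → ℂ) → ι → ℂ)
    (q : ℕ → ι → (ι → ℂ) → ℂ) (r : ℝ) : Prop where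
  differentiable : ∀ n, ∀ j ∈ s, Differentiable ℂ (q n j)
  apply_eq : ∀ n, ∀ j ∈ s, ∀ z ∈ ball (0 : ι → ℂ) r, f n z j = triangularMap (lam n) (q n) z j

variable {L : ℕ → (ι → ℂ) →L[ℂ] (ι → ℂ)} {lam : ℕ → ι → ℂ} {f : ℕ → (ι → ℂ) → ι → ℂ}
  {q : ℕ → ι → (ι → ℂ) → ℂ} {a θ η r K : ℝ} {M : ℕ → ℝ} {N : ℕ → ι → ℝ}

lemma TriangularOn.mono {s : Set ι} (h : TriangularOn s lam f q r) {ρ : ℝ} (hρ : ρ ≤ r) :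
    TriangularOn s lam f q ρ :=
  ⟨h.differentiable, fun n j hj z hz => h.apply_eq n j hj z (ball_subset_ball hρ hz)⟩

lemma TriangularOn.lowerProj_apply_eq {i : ι} (h : TriangularOn (Set.Iio i) lam f q r) (n : ℕ)
    {z w : ι → ℂ} (hz : z ∈ ball (0 : ι → ℂ) r) (hw : w ∈ ball (0 : ι → ℂ) r)
    (hzw : lowerProj i z = lowerProj i w) : lowerProj i (f n z) = lowerProj i (f n w) := by
  rw [lowerProj_eq_iff] at hzw ⊢
  intro j hj
  rw [h.apply_eq n j hj z hz, h.apply_eq n j hj w hw]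
  exact triangularMap_congr rfl fun l hl => hzw l (hl.trans_lt hj)

namespace TriangularDomination

lemma norm_map_le (hL : TriangularDomination L lam a θ η M N) (hf : UniformGerm L f r K)
    (hη : K * r ≤ η) (n : ℕ) (z : ι → ℂ) (hz : z ∈ ball (0 : ι → ℂ) r) : ‖f n z‖ ≤ θ * ‖z‖ :=
  (hf.norm_apply_le hη n hz (hL.norm_apply_le n z)).trans (by gcongr; exact hL.bound_add_le n)

lemma fiberedContraction (hL : TriangularDomination L lam a θ η M N) (hf : UniformGerm L f r K)
    (hη : K * r ≤ η) (hr : r ≤ 1) {i : ι} (ht : TriangularOn (Set.Iio i) lam f q r) :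
    FiberedContraction (lowerProj i) (.proj i) (fun n => lam n i) f r a θ K (fun n => M n + η)
      (fun n => N n i + η) where
  proj_proj := lowerProj_lowerProj i
  norm_proj_le := norm_lowerProj_le i
  apply_proj := lowerProj_apply_self i
  radius_pos := hf.radius_pos
  radius_le_one := hr
  pos := hL.pos
  le_norm n := hL.le_norm n i
  rate_lt_one := hL.rate_lt_one
  const_nonneg := hf.const_nonneg
  differentiableOn := hf.differentiableOn
  contraction_nonneg n := add_nonneg (hL.bound_nonneg n) hL.margin_pos.le
  contraction_le := hL.bound_add_le
  norm_apply_le n z hz := hf.norm_apply_le hη n hz (hL.norm_apply_le n z)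
  proj_apply n _ hz _ hw hzw := ht.lowerProj_apply_eq n hz hw hzw
  norm_apply_sub_le n z hz w hw hzw := hf.norm_apply_sub_le hη n hz hw <|
    hL.norm_apply_le_of_lower n i _ fun l hl => sub_eq_zero.2 (lowerProj_eq_iff.1 hzw l hl)
  mul_rate_le n := hL.mul_bound_le n i
  norm_defect_le n z hz w hw hzw := by
    have hLi := hL.apply_of_lower n i (z - w) fun l hl =>
      sub_eq_zero.2 (lowerProj_eq_iff.1 hzw l hl)
    refine le_of_eq_of_le ?_
      ((norm_le_pi_norm _ i).trans (hf.norm_remainder_sub_le n z hz w hw))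
    simp only [map_sub, Pi.sub_apply, ContinuousLinearMap.proj_apply] at hLi ⊢
    congr 1
    linear_combination hLi

end TriangularDomination

lemma NearIdentityChart.triangularOn_conjugateIdAdd {i : ι} {w : ℕ → (ι → ℂ) → ℂ}
    {p : ℕ → (ι → ℂ) → ℂ} {κ : ℕ → (ι → ℂ) → ι → ℂ} {ρ : ℝ}
    (hκ : NearIdentityChart (fun n z => Pi.single i (w n z)) κ ρ K)
    (ht : TriangularOn (Set.Iio i) lam f q ρ) (hp : ∀ n, Differentiable ℂ (p n))
    (hw : ∀ n, ∀ z ∈ ball (0 : ι → ℂ) ρ,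
      f n z i + w (n + 1) (f n z) = lam n i * (z i + w n z) + p n (lowerProj i z)) :
    TriangularOn (Set.Iic i) lam (conjugateIdAdd (fun n z => Pi.single i (w n z)) κ f)
      (fun n => Function.update (q n) i (p n)) (ρ / 2) := by
  have hκ_lt (n : ℕ) {z : ι → ℂ} (hz : z ∈ ball (0 : ι → ℂ) (ρ / 2)) (l : ι) (hl : l < i) :
      κ n z l = z l := by
    simpa [hl.ne] using congrFun (hκ.inv_add n z hz) l
  have hκ_self (n : ℕ) {z : ι → ℂ} (hz : z ∈ ball (0 : ι → ℂ) (ρ / 2)) :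
      κ n z i + w n (κ n z) = z i := by
    simpa using congrFun (hκ.inv_add n z hz) i
  refine ⟨fun n j hj => ?_, fun n j hj z hz => ?_⟩ <;> rcases (Set.mem_Iic.1 hj).lt_or_eq with
    hji | rfl
  · simpa only [Function.update_of_ne hji.ne] using ht.differentiable n j hji
  · simpa only [Function.update_self] using hp n
  · simp only [conjugateIdAdd, Pi.add_apply, Pi.single_eq_of_ne hji.ne, add_zero,
      ht.apply_eq n j hji _ (hκ.inv_mem_ball n hz)]
    exact triangularMap_congr (Function.update_of_ne hji.ne _ _).symm fun l hl =>
      hκ_lt n hz l (hl.trans_lt hji)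
  · simp only [conjugateIdAdd, Pi.add_apply, Pi.single_eq_same, triangularMap,
      Function.update_self, hw n _ (hκ.inv_mem_ball n hz), hκ_self n hz]
    rw [lowerProj_eq_iff.2 (hκ_lt n hz)]

namespace TriangularDomination

lemma exists_triangularOn_Iic_of_small (hL : TriangularDomination L lam a θ η M N)
    (hf : UniformGerm L f r K) (hη : K * r ≤ η) (hr : r ≤ 1) {i : ι}
    (ht : TriangularOn (Set.Iio i) lam f q r) :
    ∃ f' q' r' K', UniformGerm L f' r' K' ∧ LocallyConjugate f f' ∧
      TriangularOn (Set.Iic i) lam f' q' r' := by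
  obtain ⟨w, p, C, hC, hw⟩ := (hL.fiberedContraction hf hη hr ht).exists_quadratic_correction
  have hWd (n : ℕ) : DifferentiableOn ℂ (fun z => (Pi.single i (w n z) : ι → ℂ)) (ball 0 r) :=
    (ContinuousLinearMap.single ℂ (fun _ : ι => ℂ) i).differentiable.comp_differentiableOn (hw n).1
  obtain ⟨κ, ρ, hρr, hκ⟩ := exists_nearIdentityChart hf.radius_pos hC hWd fun n z hz =>
    (Pi.norm_single (G := fun _ : ι => ℂ) (w n z)).trans_le ((hw n).2.1 z hz)
  have hsub := ball_subset_ball (x := (0 : ι → ℂ)) hρr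
  have hcontr (n : ℕ) (z : ι → ℂ) (hz : z ∈ ball (0 : ι → ℂ) ρ) : ‖f n z‖ ≤ ‖z‖ :=
    (hL.norm_map_le hf hη n z (hsub hz)).trans
      (mul_le_of_le_one_left (norm_nonneg z) hL.rate_lt_one.le)
  obtain ⟨K', hK'⟩ := hκ.exists_uniformGerm_conjugateIdAdd hC (hf.mono hκ.radius_pos hρr) hcontr
  have htri := hκ.triangularOn_conjugateIdAdd (ht.mono hρr) (fun n => (hw n).2.2.1)
    fun n z hz => (hw n).2.2.2 z (hsub hz)
  exact ⟨_, _, _, K', hK', hκ.locallyConjugate hcontr,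
    htri.mono (half_le_self (half_pos hκ.radius_pos).le)⟩

lemma exists_small_radius (hL : TriangularDomination L lam a θ η M N) (hf : UniformGerm L f r K) :
    ∃ ρ ≤ r, ρ ≤ 1 ∧ K * ρ ≤ η ∧ UniformGerm L f ρ K := by
  have hη := hL.margin_pos
  have hr := hf.radius_pos
  have hK := hf.const_nonneg
  refine ⟨min r (min 1 (η / (K + 1))), min_le_left _ _, (min_le_right _ _).trans (min_le_left _ _),
    ?_, hf.mono (by positivity) (min_le_left _ _)⟩
  calc K * min r (min 1 (η / (K + 1))) ≤ (K + 1) * (η / (K + 1)) := by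
        gcongr
        · exact le_add_of_nonneg_right zero_le_one
        · exact (min_le_right _ _).trans (min_le_right _ _)
    _ = η := by field_simp

lemma exists_triangularOn_of_isLowerSet (hL : TriangularDomination L lam a θ η M N)
    (hf : UniformGerm L f r K) (s : Finset ι) (hs : IsLowerSet (s : Set ι)) :
    ∃ f' q r' K', UniformGerm L f' r' K' ∧ LocallyConjugate f f' ∧
      TriangularOn (s : Set ι) lam f' q r' := by
  induction s using Finset.induction_on_max with
  | empty =>
    exact ⟨f, 0, r, K, hf, .of_eqOn_ball one_pos fun n => Set.eqOn_refl _ _, by simp, by simp⟩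
  | insert i s hlt ih =>
    have hs_eq : (s : Set ι) = Set.Iio i := Set.ext fun j =>
      ⟨hlt j, fun hj => (Finset.mem_insert.1 (hs (le_of_lt hj) (by simp))).resolve_left hj.ne⟩
    obtain ⟨g, q, ρ, K', hg, hfg, htri⟩ := ih (hs_eq ▸ isLowerSet_Iio i)
    obtain ⟨ρ', hρ', hρ1, hη, hg'⟩ := hL.exists_small_radius hg
    rw [hs_eq] at htri
    obtain ⟨f', q', r', K'', hf', hgf', htri'⟩ :=
      hL.exists_triangularOn_Iic_of_small hg' hη hρ1 (htri.mono hρ')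
    refine ⟨f', q', r', K'', hf', hfg.trans hgf', ?_⟩
    rwa [Finset.coe_insert, hs_eq, Set.Iio_insert]

theorem exists_locallyConjugate_triangularMap (hL : TriangularDomination L lam a θ η M N)
    (hf : UniformGerm L f r K) :
    ∃ (q : ℕ → ι → (ι → ℂ) → ℂ) (ρ : ℝ), 0 < ρ ∧ (∀ n j, Differentiable ℂ (q n j)) ∧
      (∀ n, ∀ z ∈ ball (0 : ι → ℂ) ρ, ‖triangularMap (lam n) (q n) z‖ ≤ θ * ‖z‖) ∧
      LocallyConjugate f fun n => triangularMap (lam n) (q n) := by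
  obtain ⟨g, q, r', K', hg, hfg, htri⟩ :=
    hL.exists_triangularOn_of_isLowerSet hf Finset.univ (by simp [isLowerSet_univ])
  obtain ⟨ρ, hρ, -, hη, hg'⟩ := hL.exists_small_radius hg
  have heq (n : ℕ) : Set.EqOn (g n) (triangularMap (lam n) (q n)) (ball 0 ρ) := fun z hz =>
    funext fun j => htri.apply_eq n j (by simp) z (ball_subset_ball hρ hz)
  refine ⟨q, ρ, hg'.radius_pos, fun n j => htri.differentiable n j (by simp), fun n z hz => ?_,
    hfg.trans (.of_eqOn_ball hg'.radius_pos heq)⟩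
  rw [← heq n hz]
  exact hL.norm_map_le hg' hη n z hz

end TriangularDomination

end NormalForm

/-! ### Basins of attraction -/

lemma mapsTo_ball_of_norm_le {E : Type*} [SeminormedAddCommGroup E] {f : E → E} {r ρ : ℝ}
    (hf : ∀ z ∈ ball (0 : E) r, ‖f z‖ ≤ ‖z‖) (hρ : ρ ≤ r) :
    Set.MapsTo f (ball 0 ρ) (ball 0 ρ) := fun z hz =>
  mem_ball_zero_iff.2 ((hf z (ball_subset_ball hρ hz)).trans_lt (mem_ball_zero_iff.1 hz))

section Basin

variable {E F : Type*} [NormedAddCommGroup E] [NormedSpace ℂ E] [NormedAddCommGroup F]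
  [NormedSpace ℂ F]

/-- The basin of attraction of the origin for the compositions `f_{n-1} ∘ ⋯ ∘ f_0`. -/
def basin (f : ℕ → E → E) : Set E :=
  {z | Tendsto (fun n => seqComp f n z) atTop (𝓝 0)}

/-- A holomorphic self-map of the whole space with a holomorphic inverse; on `ℂ^k` this unfolds to
`IsAutomorphism`. -/
def IsHolomorphicAut (f : E → E) : Prop :=
  Differentiable ℂ f ∧ ∃ g : E → E, Differentiable ℂ g ∧
    Function.LeftInverse g f ∧ Function.RightInverse g f

/-- Two subsets of complex normed spaces are biholomorphic. -/
def Biholomorphic (s : Set E) (t : Set F) : Prop :=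
  ∃ (Ψ : E → F) (Φ : F → E), DifferentiableOn ℂ Ψ s ∧ DifferentiableOn ℂ Φ t ∧
    Set.MapsTo Ψ s t ∧ Set.MapsTo Φ t s ∧ Set.InvOn Φ Ψ s t

/-- On the basin of `f`, the map `Ψ` is `h_n` read in far iterates: `g(n) ∘ Ψ = h_n ∘ f(n)` for
large `n`, where `f(n)` and `g(n)` are the compositions of the first `n` maps. -/
def ExtendsToBasin (f : ℕ → E → E) (g : ℕ → F → F) (h : ℕ → E → F) (Ψ : E → F) : Prop :=
  ∀ z ∈ basin f, ∀ᶠ n in atTop, seqComp g n (Ψ z) = h n (seqComp f n z)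

lemma differentiable_seqComp {f : ℕ → E → E} (hf : ∀ n, Differentiable ℂ (f n)) (n : ℕ) :
    Differentiable ℂ (seqComp f n) := by
  induction n with
  | zero => exact differentiable_id
  | succ n ih => exact (hf n).comp ih

namespace IsHolomorphicAut

lemma comp {f g : E → E} (hf : IsHolomorphicAut f) (hg : IsHolomorphicAut g) :
    IsHolomorphicAut (f ∘ g) := by
  obtain ⟨hfd, f', hf'd, hf'l, hf'r⟩ := hf
  obtain ⟨hgd, g', hg'd, hg'l, hg'r⟩ := hg
  exact ⟨hfd.comp hgd, g' ∘ f', hg'd.comp hf'd, hf'l.comp hg'l, hf'r.comp hg'r⟩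

lemma seqComp {f : ℕ → E → E} (hf : ∀ n, IsHolomorphicAut (f n)) (n : ℕ) :
    IsHolomorphicAut (seqComp f n) := by
  induction n with
  | zero => exact ⟨differentiable_id, id, differentiable_id, fun _ => rfl, fun _ => rfl⟩
  | succ n ih => exact (hf n).comp ih

lemma injective {f : E → E} (hf : IsHolomorphicAut f) : Function.Injective f :=
  let ⟨_, _, _, hl, _⟩ := hf
  hl.injective

lemma eq_of_eventually_seqComp_eq {f : ℕ → E → E} (hf : ∀ n, IsHolomorphicAut (f n))
    {u : ℕ → E} {z w : E} (hz : ∀ᶠ n in atTop, _root_.seqComp f n z = u n)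
    (hw : ∀ᶠ n in atTop, _root_.seqComp f n w = u n) : z = w := by
  obtain ⟨n, hzn, hwn⟩ := (hz.and hw).exists
  exact (seqComp hf n).injective (hzn.trans hwn.symm)

end IsHolomorphicAut

namespace LocalConjugation

variable {f : ℕ → E → E} {g : ℕ → F → F} {r C : ℝ} {h : ℕ → E → F} {k : ℕ → F → E}

lemma mono (H : LocalConjugation f g r C h k) {ρ : ℝ} (hρ : ρ ≤ r) :
    LocalConjugation f g ρ C h k :=
  have hsub := ball_subset_ball (x := (0 : E)) hρ
  ⟨fun n => (H.differentiableOn n).mono hsub, fun n z hz => H.norm_le n z (hsub hz),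
    fun n z hz => H.left_inv n z (hsub hz), fun n z hz => H.semiconj n z (hsub hz)⟩

lemma seqComp_eq_of_le (H : LocalConjugation f g r C h k)
    (hf : ∀ n, Set.MapsTo (f n) (ball 0 r) (ball 0 r)) {m : ℕ} {z : E} {w : F}
    (hz : seqComp f m z ∈ ball (0 : E) r) (hw : seqComp g m w = h m (seqComp f m z)) {n : ℕ}
    (hmn : m ≤ n) : seqComp f n z ∈ ball (0 : E) r ∧ seqComp g n w = h n (seqComp f n z) := by
  induction n, hmn using Nat.le_induction with
  | base => exact ⟨hz, hw⟩
  | succ n _ ih =>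
    refine ⟨hf n ih.1, ?_⟩
    simp only [seqComp, Function.comp_apply, ih.2, H.semiconj n _ ih.1]

lemma exists_extendsToBasin (H : LocalConjugation f g r C h k) (hr : 0 < r)
    (hf : ∀ n, Set.MapsTo (f n) (ball 0 r) (ball 0 r)) (hfd : ∀ n, Differentiable ℂ (f n))
    (hg : ∀ n, IsHolomorphicAut (g n)) :
    ∃ Ψ, DifferentiableOn ℂ Ψ (basin f) ∧ ExtendsToBasin f g h Ψ := by
  choose G hGd _ hG using fun n => (IsHolomorphicAut.seqComp hg n).2
  have hlocal (m : ℕ) (z : E) (hz : seqComp f m z ∈ ball (0 : E) r) :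
      ∀ᶠ n in atTop, seqComp g n (G m (h m (seqComp f m z))) = h n (seqComp f n z) :=
    (eventually_ge_atTop m).mono fun n hn => (H.seqComp_eq_of_le hf hz (hG m _) hn).2
  have hball (z : E) (hz : z ∈ basin f) : ∃ m, seqComp f m z ∈ ball (0 : E) r :=
    (hz.eventually (ball_mem_nhds 0 hr)).exists
  choose! m hm using hball
  have hext : ExtendsToBasin f g h fun z => G (m z) (h (m z) (seqComp f (m z) z)) :=
    fun z hz => hlocal (m z) z (hm z hz)
  refine ⟨_, fun z hz => ?_, hext⟩
  have hfdm := differentiable_seqComp hfd (m z)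
  have hd : DifferentiableAt ℂ (fun y => G (m z) (h (m z) (seqComp f (m z) y))) z :=
    (hGd _ _).comp z (((H.differentiableOn _).differentiableAt
      (isOpen_ball.mem_nhds (hm z hz))).comp z (hfdm z))
  refine hd.differentiableWithinAt.congr_of_eventuallyEq_of_mem ?_ hz
  filter_upwards [self_mem_nhdsWithin, mem_nhdsWithin_of_mem_nhds
    ((isOpen_ball.preimage hfdm.continuous).mem_nhds (hm z hz))] with y hy hyball
  exact IsHolomorphicAut.eq_of_eventually_seqComp_eq hg (hext y hy) (hlocal (m z) y hyball)

lemma mapsTo_basin (H : LocalConjugation f g r C h k) (hr : 0 < r) {Ψ : E → F}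
    (hΨ : ExtendsToBasin f g h Ψ) : Set.MapsTo Ψ (basin f) (basin g) := by
  intro z hz
  have hbound : Tendsto (fun n => C * ‖seqComp f n z‖) atTop (𝓝 0) := by
    simpa using hz.norm.const_mul C
  refine squeeze_zero_norm' ?_ hbound
  filter_upwards [hz.eventually (ball_mem_nhds 0 hr), hΨ z hz] with n hn hΨn
  rw [hΨn]
  exact H.norm_le n _ hn

lemma leftInvOn_basin (H : LocalConjugation f g r C h k) (hr : 0 < r)
    (hf : ∀ n, IsHolomorphicAut (f n)) {Ψ : E → F} {Φ : F → E} (hΨ : ExtendsToBasin f g h Ψ)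
    (hΦ : ExtendsToBasin g f k Φ) : Set.LeftInvOn Φ Ψ (basin f) := by
  intro z hz
  refine IsHolomorphicAut.eq_of_eventually_seqComp_eq hf (hΦ (Ψ z) (H.mapsTo_basin hr hΨ hz)) ?_
  filter_upwards [hz.eventually (ball_mem_nhds 0 hr), hΨ z hz] with n hn hΨn
  rw [hΨn, H.left_inv n _ hn]

end LocalConjugation

theorem LocallyConjugate.biholomorphic_basin {f : ℕ → E → E} {g : ℕ → F → F} {r s : ℝ}
    (hfg : LocallyConjugate f g) (hf : ∀ n, IsHolomorphicAut (f n))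
    (hg : ∀ n, IsHolomorphicAut (g n)) (hr : 0 < r) (hs : 0 < s)
    (hfr : ∀ n, ∀ z ∈ ball (0 : E) r, ‖f n z‖ ≤ ‖z‖)
    (hgs : ∀ n, ∀ z ∈ ball (0 : F) s, ‖g n z‖ ≤ ‖z‖) : Biholomorphic (basin f) (basin g) := by
  obtain ⟨ρ, C, h, k, hρ, -, hh, hk⟩ := hfg
  have hr' : 0 < min ρ r := lt_min hρ hr
  have hs' : 0 < min ρ s := lt_min hρ hs
  obtain ⟨Ψ, hΨd, hΨ⟩ := (hh.mono (min_le_left ρ r)).exists_extendsToBasin hr'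
    (fun n => mapsTo_ball_of_norm_le (hfr n) (min_le_right ρ r)) (fun n => (hf n).1) hg
  obtain ⟨Φ, hΦd, hΦ⟩ := (hk.mono (min_le_left ρ s)).exists_extendsToBasin hs'
    (fun n => mapsTo_ball_of_norm_le (hgs n) (min_le_right ρ s)) (fun n => (hg n).1) hf
  exact ⟨Ψ, Φ, hΨd, hΦd, hh.mapsTo_basin hρ hΨ, hk.mapsTo_basin hρ hΦ,
    hh.leftInvOn_basin hρ hf hΨ hΦ, hk.leftInvOn_basin hρ hg hΦ hΨ⟩

end Basin

/-! ### Triangular automorphisms -/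

section TriangularMap

lemma tendsto_zero_of_le_mul_add {u e : ℕ → ℝ} {θ : ℝ} (hu : ∀ n, 0 ≤ u n) (hθ : 0 ≤ θ)
    (hθ1 : θ < 1) (he : Tendsto e atTop (𝓝 0)) (h : ∀ n, u (n + 1) ≤ θ * u n + e n) :
    Tendsto u atTop (𝓝 0) := by
  refine tendsto_order.2 ⟨fun b hb => .of_forall fun n => hb.trans_le (hu n), fun ε hε => ?_⟩
  obtain ⟨m, hm⟩ := eventually_atTop.1 <|
    he.eventually_le_const (show 0 < (1 - θ) * (ε / 2) from mul_pos (sub_pos.2 hθ1) (half_pos hε))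
  have hgeom (n : ℕ) : u (n + m) - ε / 2 ≤ θ ^ n * (u (0 + m) - ε / 2) := by
    refine le_geom (u := fun n => u (n + m) - ε / 2) hθ n fun i _ => ?_
    have := h (i + m)
    have := hm (i + m) (Nat.le_add_left m i)
    rw [add_right_comm]
    linarith
  have hlim : Tendsto (fun n => θ ^ n * (u (0 + m) - ε / 2)) atTop (𝓝 0) := by
    simpa using (tendsto_pow_atTop_nhds_zero_of_lt_one hθ hθ1).mul_const (u (0 + m) - ε / 2)
  rw [← map_add_atTop_eq_nat m, eventually_map]
  filter_upwards [hlim.eventually_lt_const (half_pos hε)] with n hn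
  linarith [hgeom n]

variable {ι : Type*} [LinearOrder ι]

/-- The inverse of `triangularMap λ q` (for nonvanishing `λ`), computed from the lowest coordinate
upwards. -/
def triangularInv [WellFoundedLT ι] (lam : ι → ℂ) (q : ι → (ι → ℂ) → ℂ) (w : ι → ℂ) (j : ι) : ℂ :=
  WellFoundedLT.fix (motive := fun _ : ι => ℂ)
    (fun j inv => (w j - q j fun l => if h : l < j then inv l h else 0) / lam j) j

lemma triangularInv_apply [WellFoundedLT ι] (lam : ι → ℂ) (q : ι → (ι → ℂ) → ℂ) (w : ι → ℂ)
    (j : ι) :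
    triangularInv lam q w j = (w j - q j (lowerProj j (triangularInv lam q w))) / lam j := by
  rw [triangularInv, WellFoundedLT.fix_eq]
  congr 3
  ext l
  rw [lowerProj_apply, dite_eq_ite]
  rfl

lemma triangularMap_triangularInv [WellFoundedLT ι] {lam : ι → ℂ} (hlam : ∀ j, lam j ≠ 0)
    (q : ι → (ι → ℂ) → ℂ) (w : ι → ℂ) : triangularMap lam q (triangularInv lam q w) = w := by
  ext j
  rw [triangularMap, triangularInv_apply, mul_div_cancel₀ _ (hlam j), sub_add_cancel]

lemma triangularInv_triangularMap [WellFoundedLT ι] {lam : ι → ℂ} (hlam : ∀ j, lam j ≠ 0)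
    (q : ι → (ι → ℂ) → ℂ) (z : ι → ℂ) : triangularInv lam q (triangularMap lam q z) = z := by
  ext j
  induction j using WellFoundedLT.induction with
  | ind j ih =>
    rw [triangularInv_apply, lowerProj_eq_iff.2 ih, triangularMap, add_sub_cancel_right,
      mul_div_cancel_left₀ _ (hlam j)]

lemma differentiable_triangularMap [Finite ι] (lam : ι → ℂ) {q : ι → (ι → ℂ) → ℂ}
    (hq : ∀ j, Differentiable ℂ (q j)) : Differentiable ℂ (triangularMap lam q) := by
  have := Fintype.ofFinite ι
  exact differentiable_pi.2 fun j =>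
    ((differentiable_apply j).const_mul (lam j)).add ((hq j).comp (lowerProj j).differentiable)

lemma differentiable_triangularInv [Finite ι] (lam : ι → ℂ) {q : ι → (ι → ℂ) → ℂ}
    (hq : ∀ j, Differentiable ℂ (q j)) : Differentiable ℂ (triangularInv lam q) := by
  have := Fintype.ofFinite ι
  refine differentiable_pi.2 fun j => ?_
  induction j using WellFoundedLT.induction with
  | ind j ih =>
    have hlower : Differentiable ℂ fun w => lowerProj j (triangularInv lam q w) := by
      refine differentiable_pi.2 fun l => ?_
      simp only [lowerProj_apply]
      split_ifs with hl
      · exact ih l hl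
      · exact differentiable_const 0
    simp only [triangularInv_apply, div_eq_mul_inv]
    exact ((differentiable_apply j).fun_sub ((hq j).comp hlower)).mul_const (lam j)⁻¹

variable [Fintype ι]

lemma isHolomorphicAut_triangularMap {lam : ι → ℂ} (hlam : ∀ j, lam j ≠ 0)
    {q : ι → (ι → ℂ) → ℂ} (hq : ∀ j, Differentiable ℂ (q j)) :
    IsHolomorphicAut (triangularMap lam q) :=
  ⟨differentiable_triangularMap lam hq, triangularInv lam q, differentiable_triangularInv lam hq,
    triangularInv_triangularMap hlam q, triangularMap_triangularInv hlam q⟩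

section Contraction

variable {lam : ι → ℂ} {q : ι → (ι → ℂ) → ℂ} {θ r : ℝ}

lemma norm_lowerTerm_le_of_triangularMap_contraction
    (hc : ∀ z ∈ ball (0 : ι → ℂ) r, ‖triangularMap lam q z‖ ≤ θ * ‖z‖) (j : ι) {z : ι → ℂ}
    (hz : lowerProj j z ∈ ball (0 : ι → ℂ) r) :
    ‖q j (lowerProj j z)‖ ≤ θ * ‖lowerProj j z‖ := by
  have heq : triangularMap lam q (lowerProj j z) j = q j (lowerProj j z) := by
    rw [triangularMap, lowerProj_apply_self, mul_zero, zero_add, lowerProj_lowerProj]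
  rw [← heq]
  exact (norm_le_pi_norm _ j).trans (hc _ hz)

lemma norm_diag_le_of_triangularMap_contraction (hr : 0 < r)
    (hc : ∀ z ∈ ball (0 : ι → ℂ) r, ‖triangularMap lam q z‖ ≤ θ * ‖z‖) (j : ι) :
    ‖lam j‖ ≤ θ := by
  have hq0 : q j 0 = 0 := by
    simpa using norm_lowerTerm_le_of_triangularMap_contraction hc j (z := 0) (by simpa using hr)
  have hproj : lowerProj j (Pi.single j (r / 2 : ℂ)) = 0 := by
    rw [← map_zero (lowerProj j)]
    exact lowerProj_eq_iff.2 fun l hl => Pi.single_eq_of_ne hl.ne _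
  have hnorm_half : ‖(r / 2 : ℂ)‖ = r / 2 := by simp [abs_of_pos hr]
  have hnorm : ‖(Pi.single j (r / 2 : ℂ) : ι → ℂ)‖ = r / 2 := by
    rw [Pi.norm_single (G := fun _ : ι => ℂ), hnorm_half]
  have hle := (norm_le_pi_norm _ j).trans
    (hc (Pi.single j (r / 2 : ℂ)) (mem_ball_zero_iff.2 (hnorm.trans_lt (half_lt_self hr))))
  rw [triangularMap, hproj, hq0, add_zero, norm_mul, Pi.single_eq_same, hnorm_half, hnorm] at hle
  exact le_of_mul_le_mul_right hle (half_pos hr)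

end Contraction

theorem basin_triangularMap_eq_univ {lam : ℕ → ι → ℂ} {q : ℕ → ι → (ι → ℂ) → ℂ} {θ r : ℝ}
    (hr : 0 < r) (hθ : θ < 1)
    (hc : ∀ n, ∀ z ∈ ball (0 : ι → ℂ) r, ‖triangularMap (lam n) (q n) z‖ ≤ θ * ‖z‖) :
    basin (fun n => triangularMap (lam n) (q n)) = Set.univ := by
  refine Set.eq_univ_of_forall fun w => tendsto_pi_nhds.2 fun j => ?_
  set x := fun n => seqComp (fun n => triangularMap (lam n) (q n)) n w
  induction j using WellFoundedLT.induction with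
  | ind j ih =>
    have hlam (n : ℕ) : ‖lam n j‖ ≤ θ := norm_diag_le_of_triangularMap_contraction hr (hc n) j
    have hlower : Tendsto (fun n => lowerProj j (x n)) atTop (𝓝 0) := by
      refine tendsto_pi_nhds.2 fun l => ?_
      simp only [lowerProj_apply]
      split_ifs with hl
      · exact ih l hl
      · exact tendsto_const_nhds
    have hq : Tendsto (fun n => ‖q n j (lowerProj j (x n))‖) atTop (𝓝 0) := by
      refine squeeze_zero' (.of_forall fun n => norm_nonneg _)
        ((hlower.eventually (ball_mem_nhds 0 hr)).mono fun n hn =>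
          norm_lowerTerm_le_of_triangularMap_contraction (hc n) j hn) ?_
      simpa using hlower.norm.const_mul θ
    refine tendsto_zero_iff_norm_tendsto_zero.2 <|
      tendsto_zero_of_le_mul_add (fun n => norm_nonneg _) ((norm_nonneg _).trans (hlam 0)) hθ hq
        fun n => ?_
    calc ‖x (n + 1) j‖ ≤ ‖lam n j * x n j‖ + ‖q n j (lowerProj j (x n))‖ := norm_add_le _ _
      _ ≤ θ * ‖x n j‖ + ‖q n j (lowerProj j (x n))‖ := by
        rw [norm_mul]; gcongr; exact hlam n

end TriangularMap

/-! ### Nearly diagonal triangular linear parts -/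

section UniformlyOrdered

variable {ι : Type*} [Preorder ι]

/-- Uniform form of correct ordering for the diagonals `λ_n`: the entries have modulus in `[α, τ]`
with `0 < α ≤ 1` and `τ < 1`, and `|λ_{n,i}||λ_{n,j}| ≤ τ|λ_{n,l}|` whenever `l ≤ j`. -/
structure UniformlyOrdered (lam : ℕ → ι → ℂ) (α τ : ℝ) : Prop where
  pos : 0 < α
  le_one : α ≤ 1
  rate_nonneg : 0 ≤ τ
  rate_lt_one : τ < 1
  le_norm : ∀ n i, α ≤ ‖lam n i‖
  norm_le : ∀ n i, ‖lam n i‖ ≤ τ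
  norm_mul_norm_le : ∀ n l j i, l ≤ j → ‖lam n i‖ * ‖lam n j‖ ≤ τ * ‖lam n l‖

lemma UniformlyOrdered.iSup_norm_mul_iSup_norm_le [Finite ι] {lam : ℕ → ι → ℂ} {α τ : ℝ}
    (h : UniformlyOrdered lam α τ) (n : ℕ) (i : ι) :
    (⨆ j, ‖lam n j‖) * (⨆ j : Set.Ici i, ‖lam n j‖) ≤ τ * ‖lam n i‖ := by
  have : Nonempty ι := ⟨i⟩
  obtain ⟨m, hm⟩ := exists_eq_ciSup_of_finite (f := fun j => ‖lam n j‖)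
  obtain ⟨j, hj⟩ := exists_eq_ciSup_of_finite (f := fun j : Set.Ici i => ‖lam n j‖)
  rw [← hm, ← hj]
  exact h.norm_mul_norm_le n i j m j.2

end UniformlyOrdered

section NearlyDiagonal

variable {ι : Type*} [Fintype ι]

lemma norm_mulVec_apply_le {A : Matrix ι ι ℂ} {δ : ℝ} {i : ι} (hδ : 0 ≤ δ)
    (hA : ∀ j ≠ i, ‖A i j‖ ≤ δ) (z : ι → ℂ) :
    ‖A.mulVec z i‖ ≤ (‖A i i‖ + Fintype.card ι * δ) * ‖z‖ := by
  classical
  have hentry (j : ι) : ‖A i j * z j‖ ≤ (if j = i then ‖A i i‖ * ‖z‖ else 0) + δ * ‖z‖ := by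
    rw [norm_mul]
    have hz := norm_le_pi_norm z j
    split_ifs with hj
    · subst hj
      exact (mul_le_mul_of_nonneg_left hz (norm_nonneg _)).trans
        (le_add_of_nonneg_right (by positivity))
    · rw [zero_add]
      exact mul_le_mul (hA j hj) hz (norm_nonneg _) hδ
  calc ‖A.mulVec z i‖ ≤ ∑ j, ((if j = i then ‖A i i‖ * ‖z‖ else 0) + δ * ‖z‖) :=
        norm_sum_le_of_le _ fun j _ => hentry j
    _ = (‖A i i‖ + Fintype.card ι * δ) * ‖z‖ := by
        simp only [Finset.sum_add_distrib, Finset.sum_ite_eq', Finset.mem_univ, if_true,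
          Finset.sum_const, Finset.card_univ, nsmul_eq_mul]
        ring

variable [LinearOrder ι]

section Matrix

variable {A : Matrix ι ι ℂ} {i : ι} {z : ι → ℂ}

lemma mulVec_apply_of_lower (hA : ∀ i j, i < j → A i j = 0) (hz : ∀ l < i, z l = 0) :
    A.mulVec z i = A i i * z i := by
  refine Finset.sum_eq_single i (fun j _ hj => ?_) fun h => absurd (Finset.mem_univ i) h
  rcases lt_or_gt_of_ne hj with hlt | hgt
  · rw [hz j hlt, mul_zero]
  · simp only [hA i j hgt, zero_mul]

lemma norm_mulVec_le_of_isUpperSet {s : Set ι} (hs : IsUpperSet s) {δ N : ℝ} (hδ : 0 ≤ δ)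
    (hN : 0 ≤ N) (hupper : ∀ i j, i < j → A i j = 0) (hlower : ∀ i j, j < i → ‖A i j‖ ≤ δ)
    (hdiag : ∀ i ∈ s, ‖A i i‖ + Fintype.card ι * δ ≤ N) (hz : ∀ i ∉ s, z i = 0) :
    ‖A.mulVec z‖ ≤ N * ‖z‖ := by
  refine (pi_norm_le_iff_of_nonneg (by positivity)).2 fun i => ?_
  by_cases hi : i ∈ s
  · refine (norm_mulVec_apply_le hδ (fun j hj => ?_) z).trans (by gcongr; exact hdiag i hi)
    rcases lt_or_gt_of_ne hj with hlt | hgt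
    · exact hlower i j hlt
    · rw [hupper i j hgt, norm_zero]
      exact hδ
  · have hzl (l : ι) (hl : l < i) : z l = 0 := hz l fun hls => hi (hs hl.le hls)
    rw [mulVec_apply_of_lower hupper hzl, hz i hi, mul_zero, norm_zero]
    positivity

end Matrix

namespace UniformlyOrdered

variable {lam : ℕ → ι → ℂ} {α τ : ℝ}

theorem triangularDomination (h : UniformlyOrdered lam α τ)
    {L : ℕ → (ι → ℂ) →L[ℂ] (ι → ℂ)} {A : ℕ → Matrix ι ι ℂ} {δ : ℝ} (hδ : 0 ≤ δ)
    (hcard : Fintype.card ι * δ ≤ (1 - τ) * α / 12) (hL : ∀ n z, L n z = (A n).mulVec z)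
    (hdiag : ∀ n i, A n i i = lam n i) (hupper : ∀ n i j, i < j → A n i j = 0)
    (hlower : ∀ n i j, j < i → ‖A n i j‖ ≤ δ) :
    TriangularDomination L lam α ((1 + τ) / 2) ((1 - τ) * α / 12)
      (fun n => (⨆ j, ‖lam n j‖) + (1 - τ) * α / 12)
      (fun n i => (⨆ j : Set.Ici i, ‖lam n j‖) + (1 - τ) * α / 12) := by
  have hα := h.pos
  have hα1 := h.le_one
  have hτ := h.rate_nonneg
  have hτ1 := sub_pos.2 h.rate_lt_one
  set η := (1 - τ) * α / 12 with hη
  have hη0 : 0 < η := by positivity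
  have hη_le : η ≤ (1 - τ) / 12 := by
    rw [hη]
    gcongr
    exact mul_le_of_le_one_right hτ1.le hα1
  have hM0 (n : ℕ) : 0 ≤ ⨆ j, ‖lam n j‖ := Real.iSup_nonneg fun _ => norm_nonneg _
  have hN0 (n : ℕ) (i : ι) : 0 ≤ ⨆ j : Set.Ici i, ‖lam n j‖ :=
    Real.iSup_nonneg fun _ => norm_nonneg _
  have hM (n : ℕ) : ⨆ j, ‖lam n j‖ ≤ τ := Real.iSup_le (h.norm_le n) hτ
  have hN (n : ℕ) (i : ι) : ⨆ j : Set.Ici i, ‖lam n j‖ ≤ τ :=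
    Real.iSup_le (fun j => h.norm_le n j) hτ
  refine ⟨hα, by linarith, hη0, fun n => add_nonneg (hM0 n) hη0.le, fun n => ?_, fun n z => ?_,
    h.le_norm, fun n i => ?_, fun n i z hz => ?_, fun n i z hz => ?_⟩
  · linarith [hM n]
  · rw [hL]
    exact norm_mulVec_le_of_isUpperSet isUpperSet_univ hδ (add_nonneg (hM0 n) hη0.le) (hupper n)
      (hlower n) (fun i _ => add_le_add (hdiag n i ▸ Finite.le_ciSup (‖lam n ·‖) i) hcard)
      fun i hi => absurd (Set.mem_univ i) hi
  · have hprod := h.iSup_norm_mul_iSup_norm_le n i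
    have hgap : 12 * η ≤ (1 - τ) * ‖lam n i‖ := by
      rw [hη, mul_div_cancel₀ _ (by norm_num)]
      gcongr
      exact h.le_norm n i
    nlinarith [hM n, hN n i, hM0 n, hN0 n i]
  · rw [hL]
    exact norm_mulVec_le_of_isUpperSet (isUpperSet_Ici i) hδ (add_nonneg (hN0 n i) hη0.le)
      (hupper n) (hlower n) (fun m hm => add_le_add
        (hdiag n m ▸ Finite.le_ciSup (fun j : Set.Ici i => ‖lam n j‖) ⟨m, hm⟩) hcard)
      fun l hl => hz l (not_le.1 hl)
  · rw [hL, mulVec_apply_of_lower (hupper n) hz, hdiag]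

end UniformlyOrdered

end NearlyDiagonal

/-! ### Derivatives at the origin -/

lemma mul_norm_le_norm_apply_of_hasFDerivAt {𝕜 E F : Type*} [NontriviallyNormedField 𝕜]
    [NormedAddCommGroup E] [NormedSpace 𝕜 E] [NormedAddCommGroup F] [NormedSpace 𝕜 F] {f : E → F}
    {f' : E →L[𝕜] F} {x : E} {a : ℝ} (hf : HasFDerivAt f f' x)
    (ha : ∀ᶠ y in 𝓝 x, a * ‖y - x‖ ≤ ‖f y - f x‖) (v : E) : a * ‖v‖ ≤ ‖f' v‖ := by
  refine ge_of_tendsto (hf.hasLineDerivAt v).tendsto_slope_zero.norm ?_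
  have hline : Tendsto (fun t : 𝕜 => x + t • v) (𝓝[≠] 0) (𝓝 x) :=
    (Continuous.tendsto' (by fun_prop) 0 x (by simp)).mono_left nhdsWithin_le_nhds
  filter_upwards [hline.eventually ha, self_mem_nhdsWithin] with t ht ht0
  rw [add_sub_cancel_left, norm_smul] at ht
  rw [norm_smul, norm_inv, le_inv_mul_iff₀ (norm_pos_iff.2 ht0)]
  linarith

section Conjugation

variable {E F : Type*} [NormedAddCommGroup E] [NormedSpace ℂ E] [NormedAddCommGroup F]
  [NormedSpace ℂ F]

lemma exists_uniformGerm_conj (T : E ≃L[ℂ] F) {f : ℕ → E → E} {r C : ℝ} (hr : 0 < r)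
    (hd : ∀ n, DifferentiableOn ℂ (f n) (ball 0 r)) (h0 : ∀ n, f n 0 = 0)
    (hC : ∀ n, ∀ z ∈ ball (0 : E) r, ‖f n z‖ ≤ C) :
    ∃ ρ K, UniformGerm (fun n => (T : E →L[ℂ] F) ∘L fderiv ℂ (f n) 0 ∘L (T.symm : F →L[ℂ] E))
      (fun n w => T (f n (T.symm w))) ρ K := by
  set S : F →L[ℂ] E := (T.symm : F →L[ℂ] E)
  have hmaps (w : F) (hw : w ∈ ball (0 : F) (r / (‖S‖ + 1))) : T.symm w ∈ ball (0 : E) r := by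
    rw [mem_ball_zero_iff, lt_div_iff₀ (by positivity)] at hw
    rw [mem_ball_zero_iff]
    calc ‖T.symm w‖ ≤ ‖S‖ * ‖w‖ := S.le_opNorm w
      _ ≤ ‖w‖ * (‖S‖ + 1) := by linarith [norm_nonneg w]
      _ < r := hw
  refine ⟨_, _, .of_norm_le (r := r / (‖S‖ + 1)) (C := ‖(T : E →L[ℂ] F)‖ * C) (by positivity)
    (fun n => ?_) (fun n => ?_) (fun n => ?_) fun n w hw => ?_⟩
  · exact T.differentiable.comp_differentiableOn
      ((hd n).comp T.symm.differentiable.differentiableOn hmaps)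
  · simp only [map_zero, h0]
  · have hf : HasFDerivAt (f n) (fderiv ℂ (f n) 0) (T.symm 0) := by
      rw [map_zero]
      exact ((hd n).differentiableAt (ball_mem_nhds 0 hr)).hasFDerivAt
    exact T.hasFDerivAt.comp 0 (hf.comp 0 T.symm.hasFDerivAt)
  · exact (T : E →L[ℂ] F).le_opNorm_of_le (hC n _ (hmaps w hw))

end Conjugation

section DerivMatrix

variable {k : ℕ} {F : Ck k → Ck k} {a b : ℝ}

lemma fderiv_apply_eq_mulVec (F : Ck k → Ck k) (v : Ck k) (i : Fin k) :
    fderiv ℂ F 0 v i = (derivMatrix F).mulVec v i := by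
  conv_lhs => rw [← (EuclideanSpace.basisFun (Fin k) ℂ).sum_repr v]
  simp [derivMatrix, Matrix.mulVec, dotProduct, mul_comm]

lemma norm_derivMatrix_le (hb : ‖fderiv ℂ F 0‖ ≤ b) (i j : Fin k) : ‖derivMatrix F i j‖ ≤ b :=
  calc ‖derivMatrix F i j‖ ≤ ‖fderiv ℂ F 0 (EuclideanSpace.single j 1)‖ := PiLp.norm_apply_le _ i
    _ ≤ b * ‖(EuclideanSpace.single j 1 : Ck k)‖ := (fderiv ℂ F 0).le_of_opNorm_le hb _
    _ = b := by simp

lemma LowerTriAtZero.le_norm_derivMatrix_of_isTop (hF : LowerTriAtZero F)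
    (ha : ∀ v, a * ‖v‖ ≤ ‖fderiv ℂ F 0 v‖) {m : Fin k} (hm : IsTop m) :
    a ≤ ‖derivMatrix F m m‖ := by
  have hcol : fderiv ℂ F 0 (EuclideanSpace.single m 1) =
      EuclideanSpace.single m (derivMatrix F m m) := by
    ext i
    rcases (hm i).eq_or_lt with rfl | hi
    · simp [derivMatrix]
    · rw [PiLp.single_apply, if_neg hi.ne]
      exact hF i m hi
  simpa [hcol] using ha (EuclideanSpace.single m 1)

lemma LowerTriAtZero.sq_le_norm_derivMatrix (hF : LowerTriAtZero F) (ha0 : 0 ≤ a)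
    (ha : ∀ v, a * ‖v‖ ≤ ‖fderiv ℂ F 0 v‖)
    (hord : ∀ l j, l ≤ j → ‖derivMatrix F j j‖ * ‖derivMatrix F j j‖ ≤ ‖derivMatrix F l l‖)
    (i : Fin k) : a ^ 2 ≤ ‖derivMatrix F i i‖ := by
  have : Nonempty (Fin k) := ⟨i⟩
  obtain ⟨m, hm⟩ : ∃ m : Fin k, IsTop m := Finite.exists_max id
  have hlast := hF.le_norm_derivMatrix_of_isTop ha hm
  calc a ^ 2 ≤ ‖derivMatrix F m m‖ * ‖derivMatrix F m m‖ := by rw [sq]; gcongr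
    _ ≤ ‖derivMatrix F i i‖ := hord i m (hm i)

end DerivMatrix

namespace UniformlyAttracting

variable {k : ℕ} {F : ℕ → Ck k → Ck k}

lemma norm_le (hF : UniformlyAttracting F) (n : ℕ) (z : Ck k) (hz : z ∈ ball (0 : Ck k) 1) :
    ‖F n z‖ ≤ ‖z‖ := by
  obtain ⟨a, b, -, -, hb, hFab, -⟩ := hF
  exact (hFab n z hz).2.trans (mul_le_of_le_one_left (norm_nonneg z) hb.le)

lemma norm_derivMatrix_le_one (hF : UniformlyAttracting F) (hd : ∀ n, Differentiable ℂ (F n))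
    (hfix : ∀ n, F n 0 = 0) (n : ℕ) (i j : Fin k) : ‖derivMatrix (F n) i j‖ ≤ 1 := by
  refine norm_derivMatrix_le ((hd n 0).hasFDerivAt.le_of_lip' zero_le_one ?_) i j
  filter_upwards [ball_mem_nhds 0 one_pos] with z hz
  simpa only [hfix, sub_zero, one_mul] using hF.norm_le n z hz

lemma exists_uniformlyOrdered (hF : UniformlyAttracting F) (hd : ∀ n, Differentiable ℂ (F n))
    (hfix : ∀ n, F n 0 = 0) (htri : ∀ n, LowerTriAtZero (F n)) :
    ∃ α τ, UniformlyOrdered (fun n i => derivMatrix (F n) i i) α τ := by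
  obtain ⟨a, b, ha, hab, hb, hFab, ξ, hξ, hord⟩ := hF
  have hbounds (n : ℕ) : ∀ᶠ z in 𝓝 (0 : Ck k), a * ‖z - 0‖ ≤ ‖F n z - F n 0‖ ∧
      ‖F n z - F n 0‖ ≤ b * ‖z - 0‖ := by
    filter_upwards [ball_mem_nhds 0 one_pos] with z hz
    simpa only [hfix, sub_zero] using hFab n z hz
  have hlower (n : ℕ) (v : Ck k) : a * ‖v‖ ≤ ‖fderiv ℂ (F n) 0 v‖ :=
    mul_norm_le_norm_apply_of_hasFDerivAt (hd n 0).hasFDerivAt ((hbounds n).mono fun _ h => h.1) v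
  have hupper (n : ℕ) : ‖fderiv ℂ (F n) 0‖ ≤ b :=
    (hd n 0).hasFDerivAt.le_of_lip' (ha.trans hab).le ((hbounds n).mono fun _ h => h.2)
  refine ⟨a ^ 2, max b ξ, by positivity, pow_le_one₀ ha.le (hab.trans hb).le,
    (ha.trans hab).le.trans (le_max_left b ξ), max_lt hb hξ,
    fun n => (htri n).sq_le_norm_derivMatrix ha.le (hlower n) fun l j hlj => ?_,
    fun n i => (norm_derivMatrix_le (hupper n) i i).trans (le_max_left b ξ),
    fun n l j i hlj => (hord n l j i hlj).trans (by gcongr; exact le_max_right b ξ)⟩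
  exact (hord n l j j hlj).trans (mul_le_of_le_one_left (norm_nonneg _) hξ.le)

end UniformlyAttracting

/-! ### Diagonal scaling -/

section Scaling

variable {k : ℕ} {δ : ℂ}

/-- The coordinate change `z ↦ (δ^j z_j)_j` from `ℂ^k` to `Fin k → ℂ`; for small `δ` it shrinks the
entries of a lower triangular matrix below the diagonal. -/
def diagonalScaling (k : ℕ) (hδ : δ ≠ 0) : Ck k ≃L[ℂ] (Fin k → ℂ) :=
  (EuclideanSpace.equiv (Fin k) ℂ).trans <| .piCongrRight fun j =>
    .smulLeft (Units.mk0 (δ ^ (j : ℕ)) (pow_ne_zero _ hδ))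

/-- The matrix `A` in the coordinates of `diagonalScaling`. -/
def scaledMatrix (δ : ℂ) (A : Matrix (Fin k) (Fin k) ℂ) : Matrix (Fin k) (Fin k) ℂ :=
  Matrix.of fun i j => δ ^ (i : ℕ) * A i j * (δ ^ (j : ℕ))⁻¹

lemma diagonalScaling_apply (hδ : δ ≠ 0) (z : Ck k) (j : Fin k) :
    diagonalScaling k hδ z j = δ ^ (j : ℕ) * z j :=
  rfl

lemma diagonalScaling_symm_apply (hδ : δ ≠ 0) (w : Fin k → ℂ) (j : Fin k) :
    (diagonalScaling k hδ).symm w j = (δ ^ (j : ℕ))⁻¹ * w j :=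
  rfl

lemma diagonalScaling_fderiv (hδ : δ ≠ 0) (F : Ck k → Ck k) (w : Fin k → ℂ) :
    diagonalScaling k hδ (fderiv ℂ F 0 ((diagonalScaling k hδ).symm w)) =
      (scaledMatrix δ (derivMatrix F)).mulVec w := by
  ext i
  rw [diagonalScaling_apply, fderiv_apply_eq_mulVec]
  simp only [Matrix.mulVec, dotProduct, Finset.mul_sum, diagonalScaling_symm_apply, scaledMatrix,
    Matrix.of_apply, mul_assoc]

lemma scaledMatrix_apply_self (hδ : δ ≠ 0) (A : Matrix (Fin k) (Fin k) ℂ) (i : Fin k) :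
    scaledMatrix δ A i i = A i i := by
  rw [scaledMatrix, Matrix.of_apply, mul_right_comm, mul_inv_cancel₀ (pow_ne_zero _ hδ), one_mul]

lemma scaledMatrix_apply_eq_zero {A : Matrix (Fin k) (Fin k) ℂ} {i j : Fin k} (hA : A i j = 0) :
    scaledMatrix δ A i j = 0 := by
  rw [scaledMatrix, Matrix.of_apply, hA, mul_zero, zero_mul]

lemma norm_scaledMatrix_apply_le (hδ : δ ≠ 0) (hδ1 : ‖δ‖ ≤ 1) {A : Matrix (Fin k) (Fin k) ℂ}
    {i j : Fin k} (hA : ‖A i j‖ ≤ 1) (hij : j < i) : ‖scaledMatrix δ A i j‖ ≤ ‖δ‖ := by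
  have hpow : scaledMatrix δ A i j = δ ^ ((i : ℕ) - j) * A i j := by
    rw [scaledMatrix, Matrix.of_apply, pow_sub₀ δ hδ hij.le, mul_right_comm]
  rw [hpow, norm_mul, norm_pow]
  exact (mul_le_of_le_one_right (by positivity) hA).trans
    (pow_le_of_le_one (norm_nonneg δ) hδ1 (Nat.sub_ne_zero_of_lt hij))

end Scaling

lemma exists_ne_zero_norm_le_one_mul_norm_le (c : ℝ) {ε : ℝ} (hε : 0 < ε) :
    ∃ δ : ℂ, δ ≠ 0 ∧ ‖δ‖ ≤ 1 ∧ c * ‖δ‖ ≤ ε := by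
  have hsmall (a : ℝ) {ε : ℝ} (hε : 0 < ε) : ∀ᶠ δ : ℂ in 𝓝[≠] 0, a * ‖δ‖ ≤ ε :=
    nhdsWithin_le_nhds
      ((Continuous.tendsto' (by fun_prop) 0 0 (by simp)).eventually_le_const hε)
  obtain ⟨δ, ⟨hδ1, hδc⟩, hδ⟩ :=
    (((hsmall 1 one_pos).and (hsmall c hε)).and self_mem_nhdsWithin).exists
  exact ⟨δ, hδ, by rwa [one_mul] at hδ1, hδc⟩

theorem UniformlyAttracting.exists_locallyConjugate_triangularMap {k : ℕ} {F : ℕ → Ck k → Ck k}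
    (hF : UniformlyAttracting F) (hd : ∀ n, Differentiable ℂ (F n)) (hfix : ∀ n, F n 0 = 0)
    (htri : ∀ n, LowerTriAtZero (F n)) :
    ∃ (lam : ℕ → Fin k → ℂ) (q : ℕ → Fin k → (Fin k → ℂ) → ℂ) (θ ρ : ℝ), θ < 1 ∧ 0 < ρ ∧
      (∀ n j, lam n j ≠ 0) ∧ (∀ n j, Differentiable ℂ (q n j)) ∧
      (∀ n, ∀ z ∈ ball (0 : Fin k → ℂ) ρ, ‖triangularMap (lam n) (q n) z‖ ≤ θ * ‖z‖) ∧
      LocallyConjugate F fun n => triangularMap (lam n) (q n) := by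
  obtain ⟨α, τ, hord⟩ := hF.exists_uniformlyOrdered hd hfix htri
  set η := (1 - τ) * α / 12
  have hη : 0 < η := div_pos (mul_pos (sub_pos.2 hord.rate_lt_one) hord.pos) (by norm_num)
  obtain ⟨δ, hδ, hδ1, hkδ⟩ := exists_ne_zero_norm_le_one_mul_norm_le (k : ℝ) hη
  obtain ⟨r, K, hgerm⟩ := exists_uniformGerm_conj (diagonalScaling k hδ) one_pos
    (fun n => (hd n).differentiableOn) hfix
    fun n z hz => (hF.norm_le n z hz).trans (mem_ball_zero_iff.1 hz).le
  set L : ℕ → (Fin k → ℂ) →L[ℂ] (Fin k → ℂ) := fun n =>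
    (diagonalScaling k hδ : Ck k →L[ℂ] (Fin k → ℂ)) ∘L fderiv ℂ (F n) 0 ∘L
      ((diagonalScaling k hδ).symm : (Fin k → ℂ) →L[ℂ] Ck k)
  have hdom := hord.triangularDomination (L := L) (norm_nonneg δ) (by rwa [Fintype.card_fin])
    (fun n => diagonalScaling_fderiv hδ (F n)) (fun n => scaledMatrix_apply_self hδ _)
    (fun n i j hij => scaledMatrix_apply_eq_zero (htri n i j hij))
    fun n i j => norm_scaledMatrix_apply_le hδ hδ1 (hF.norm_derivMatrix_le_one hd hfix n i j)
  obtain ⟨q, ρ, hρ, hq, hcontr, hconj⟩ := hdom.exists_locallyConjugate_triangularMap hgerm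
  exact ⟨_, q, _, ρ, hdom.rate_lt_one, hρ,
    fun n j => norm_pos_iff.1 (hdom.pos.trans_le (hdom.le_norm n j)), hq, hcontr,
    (LocallyConjugate.of_continuousLinearEquiv F _).trans hconj⟩

lemma Biholomorphic.biholoToC {k : ℕ} {Ω : Set (Ck k)}
    (h : Biholomorphic Ω (Set.univ : Set (Fin k → ℂ))) : BiholoToC Ω := by
  obtain ⟨Ψ, Φ, hΨ, hΦ, -, hmaps, hleft, hright⟩ := h
  let e := EuclideanSpace.equiv (Fin k) ℂ
  refine ⟨e.symm ∘ Ψ, Φ ∘ e, e.symm.differentiable.comp_differentiableOn hΨ,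
    (differentiableOn_univ.1 hΦ).comp e.differentiable, fun w => hmaps (Set.mem_univ _),
    fun z hz => ?_, fun w => ?_⟩
  · rw [Function.comp_apply, Function.comp_apply, e.apply_symm_apply, hleft hz]
  · rw [Function.comp_apply, Function.comp_apply, hright (Set.mem_univ _), e.symm_apply_apply]

/-- **Theorem (stable).** The basin of attraction of a uniformly attracting sequence of
correctly ordered automorphisms of `ℂ^k` is biholomorphic to `ℂ^k`. -/
theorem basin_of_uniformly_attracting_biholo (k : ℕ) (F : ℕ → Ck k → Ck k)
    (hauto : ∀ n, IsAutomorphism (F n)) (hfix : ∀ n, F n 0 = 0)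
    (hord : ∀ n, CorrectlyOrdered (F n))
    (hua : UniformlyAttracting F) :
    BiholoToC {z : Ck k | Tendsto (fun n => seqComp F n z) atTop (𝓝 0)} := by
  obtain ⟨lam, q, θ, ρ, hθ, hρ, hlam, hq, hcontr, hconj⟩ :=
    hua.exists_locallyConjugate_triangularMap (fun n => (hauto n).1) hfix fun n => (hord n).1
  have hbasin : Biholomorphic (basin F) (basin fun n => triangularMap (lam n) (q n)) :=
    hconj.biholomorphic_basin hauto (fun n => isHolomorphicAut_triangularMap (hlam n) (hq n))
      one_pos hρ hua.norm_le
      fun n z hz => (hcontr n z hz).trans (mul_le_of_le_one_left (norm_nonneg z) hθ.le)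
  rw [basin_triangularMap_eq_univ hρ hθ hcontr] at hbasin
  exact hbasin.biholoToC
end
end

section
/- Let D ∈ ℕ, M > 0 and θ < 1, and let G_1, G_2, … be a sequence of lower triangular polynomial self-maps of ℂ^k, each of degree at most D, with all coefficients bounded in absolute value by M, and such that for every n the linear diagonal coefficients c_{n,1}, …, c_{n,k} of G_n satisfy |c_{n,j}| < θ for all j. Then G(n) = G_n ∘ ⋯ ∘ G_1 converges to 0 uniformly on compact subsets of ℂ^k: for every R > 0 and ε > 0 there exists N ∈ ℕ such that G(n)(B(R)) ⊆ B(ε) for all n ≥ N. -/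
open Metric Filter Topology

noncomputable section

/-- The polynomial self-map of `ℂ^k` determined by a `k`-tuple of polynomials in `k` variables. -/
def evalPolyMap {k : ℕ} (P : Fin k → MvPolynomial (Fin k) ℂ) : Ck k → Ck k :=
  fun z => (WithLp.equiv 2 (∀ _ : Fin k, ℂ)).symm
    (fun j => MvPolynomial.eval (fun i => z i) (P j))

/-- A polynomial map `G = (g_1, …, g_k)` with `G(0) = 0` is lower triangular if
`g_j(z) = c_j z_j + h_j(z_1, …, z_{j-1})`. -/
def LowerTriPolyMap {k : ℕ} (P : Fin k → MvPolynomial (Fin k) ℂ) : Prop :=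
  ∀ j : Fin k, (P j).coeff 0 = 0 ∧
    ∀ d ∈ (P j).support, d = Finsupp.single j 1 ∨ ∀ i : Fin k, j ≤ i → d i = 0

/-- `polyComp G n` is the polynomial map `G(n) = G_{n-1} ∘ ⋯ ∘ G_0`. -/
def polyComp {k : ℕ} (G : ℕ → Fin k → MvPolynomial (Fin k) ℂ) :
    ℕ → Fin k → MvPolynomial (Fin k) ℂ
  | 0 => fun j => MvPolynomial.X j
  | n + 1 => fun j => MvPolynomial.bind₁ (polyComp G n) (G n j)

/-!
Everything is controlled by a single real map: if the degrees are at most `D`, the coefficients at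
most `M` and the diagonal coefficients at most `θ` in absolute value, then each `G_n` is dominated,
coordinate by coordinate and in absolute value, by `u ↦ (θ * u_j + M * ∑ u^d)_j`, where `d` runs
over the nonzero exponents of degree at most `D` in the variables before `j`. The orbit of
`(R, …, R)` under this map therefore bounds all `G(n)` on the ball of radius `R` at once. It tends
to `0` by induction on the coordinate: once the coordinates before `j` tend to `0`, coordinate `j`
obeys a recursion `a (n + 1) = θ * a n + b n` with `b n → 0`.
-/

theorem tendsto_zero_of_norm_succ_le_mul_add {E : Type*} [SeminormedAddGroup E] {a : ℕ → E}
    {b : ℕ → ℝ} {θ : ℝ} (hθ₀ : 0 ≤ θ) (hθ₁ : θ < 1) (hb : Tendsto b atTop (𝓝 0))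
    (ha : ∀ n, ‖a (n + 1)‖ ≤ θ * ‖a n‖ + b n) : Tendsto a atTop (𝓝 0) := by
  rw [NormedAddGroup.tendsto_nhds_zero]
  intro ε hε
  have b_small : ∀ᶠ n in atTop, b n < (1 - θ) * (ε / 2) :=
    hb.eventually_lt_const (mul_pos (sub_pos.2 hθ₁) (half_pos hε))
  obtain ⟨N, hN⟩ := eventually_atTop.1 b_small
  -- From `N` on, the recursion contracts towards `ε / 2 = θ (ε / 2) + (1 - θ) (ε / 2)`.
  have excess_le : ∀ m, ‖a (N + m)‖ - ε / 2 ≤ θ ^ m * (‖a N‖ - ε / 2) := by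
    intro m
    induction m with
    | zero => simp
    | succ m ih =>
      calc ‖a (N + (m + 1))‖ - ε / 2
          ≤ θ * (‖a (N + m)‖ - ε / 2) := by
            rw [← add_assoc]
            linarith [ha (N + m), hN (N + m) (N.le_add_right m)]
        _ ≤ θ * (θ ^ m * (‖a N‖ - ε / 2)) := mul_le_mul_of_nonneg_left ih hθ₀
        _ = θ ^ (m + 1) * (‖a N‖ - ε / 2) := by ring
  have geometric : Tendsto (fun m => θ ^ m * (‖a N‖ - ε / 2)) atTop (𝓝 0) := by
    simpa using (tendsto_pow_atTop_nhds_zero_of_lt_one hθ₀ hθ₁).mul_const (‖a N‖ - ε / 2)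
  have shifted : ∀ᶠ m in atTop, ‖a (m + N)‖ < ε := by
    filter_upwards [geometric.eventually_lt_const (half_pos hε)] with m hm
    rw [add_comm m N]
    linarith [excess_le m]
  rwa [← map_add_atTop_eq_nat N]

theorem norm_prod_pow_le {ι 𝕜 : Type*} [NormedCommRing 𝕜] [NormOneClass 𝕜] (s : Finset ι)
    (z : ι → 𝕜) (d : ι → ℕ) : ‖∏ i ∈ s, z i ^ d i‖ ≤ ∏ i ∈ s, ‖z i‖ ^ d i :=
  (s.norm_prod_le fun i => z i ^ d i).trans <|
    Finset.prod_le_prod (fun _ _ => norm_nonneg _) fun i _ => norm_pow_le (z i) (d i)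

section LowerTriangular

variable {ι 𝕜 : Type*}

section PolyMap

variable [CommSemiring 𝕜]

/-- The self-map of `𝕜^ι` with components the polynomials `P j`: the counterpart of `evalPolyMap`
over an arbitrary semiring, on plain functions. -/
def polyMap (P : ι → MvPolynomial ι 𝕜) (z : ι → 𝕜) : ι → 𝕜 :=
  fun j => MvPolynomial.eval z (P j)

/-- The composition `G_{n-1} ∘ ⋯ ∘ G_0` of polynomial maps, as a map rather than as a tuple of
polynomials. -/
def polyMapComp (G : ℕ → ι → MvPolynomial ι 𝕜) : ℕ → (ι → 𝕜) → ι → 𝕜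
  | 0 => id
  | n + 1 => polyMap (G n) ∘ polyMapComp G n

/-- Lower triangular polynomial maps fixing `0`: the counterpart of `LowerTriPolyMap` over an
arbitrary semiring and for an arbitrary linearly ordered set of variables. -/
def IsLowerTriangular [LinearOrder ι] (P : ι → MvPolynomial ι 𝕜) : Prop :=
  ∀ j, (P j).coeff 0 = 0 ∧
    ∀ d ∈ (P j).support, d = Finsupp.single j 1 ∨ ∀ i, j ≤ i → d i = 0

end PolyMap

variable [LinearOrder ι]

section LowerExponents

variable [Finite ι]

open Classical in
/-- The exponents of the nonconstant monomials of degree at most `D` in the variables before `j`: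
those that can occur in the polynomial `h_j` of a lower triangular map. -/
def lowerExponents (D : ℕ) (j : ι) : Finset (ι →₀ ℕ) :=
  {d ∈ (Finsupp.finite_of_degree_le D).toFinset | d ≠ 0 ∧ ∀ i, j ≤ i → d i = 0}

theorem mem_lowerExponents {D : ℕ} {j : ι} {d : ι →₀ ℕ} :
    d ∈ lowerExponents D j ↔ d.degree ≤ D ∧ d ≠ 0 ∧ ∀ i, j ≤ i → d i = 0 := by
  simp [lowerExponents]

theorem single_notMem_lowerExponents (D : ℕ) (j : ι) :
    Finsupp.single j 1 ∉ lowerExponents D j := fun h => by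
  simpa using (mem_lowerExponents.1 h).2.2 j le_rfl

theorem IsLowerTriangular.support_subset [CommSemiring 𝕜] {P : ι → MvPolynomial ι 𝕜}
    (hP : IsLowerTriangular P) {D : ℕ} {j : ι} (hdeg : (P j).totalDegree ≤ D) :
    (P j).support ⊆ insert (Finsupp.single j 1) (lowerExponents D j) := by
  intro d hd
  refine Finset.mem_insert.2 (((hP j).2 d hd).imp_right fun d_lower => ?_)
  refine mem_lowerExponents.2 ⟨(MvPolynomial.le_totalDegree hd).trans hdeg, ?_, d_lower⟩
  rintro rfl
  exact MvPolynomial.mem_support_iff.1 hd (hP j).1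

end LowerExponents

section Majorant

variable [Fintype ι]

/-- The real lower triangular map all of whose diagonal coefficients are `θ` and all of whose other
admissible coefficients are `M`. It dominates every lower triangular map of degree at most `D` whose
coefficients are bounded by these numbers. -/
def majorantMap (D : ℕ) (M θ : ℝ) (u : ι → ℝ) : ι → ℝ :=
  fun j => θ * u j + M * ∑ d ∈ lowerExponents D j, ∏ i, u i ^ d i

theorem majorantMap_apply_mono {D : ℕ} {M θ : ℝ} (hM : 0 ≤ M) (hθ : 0 ≤ θ) {u v : ι → ℝ}
    (hu : 0 ≤ u) (huv : u ≤ v) (j : ι) : majorantMap D M θ u j ≤ majorantMap D M θ v j := by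
  unfold majorantMap
  gcongr with d _ i
  · exact huv j
  · exact fun i _ => pow_nonneg (hu i) _
  · exact hu i
  · exact huv i

theorem tendsto_sum_lowerExponents {α : Type*} {l : Filter α} (D : ℕ) {u : α → ι → ℝ} {j : ι}
    (hu : ∀ i < j, Tendsto (fun a => u a i) l (𝓝 0)) :
    Tendsto (fun a => ∑ d ∈ lowerExponents D j, ∏ i, u a i ^ d i) l (𝓝 0) := by
  rw [← Finset.sum_const_zero (s := lowerExponents D j)]
  refine tendsto_finsetSum _ fun d hd => ?_
  obtain ⟨-, d_ne_zero, d_eq_zero⟩ := mem_lowerExponents.1 hd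
  obtain ⟨i₀, hi₀⟩ := Finsupp.ne_iff.1 d_ne_zero
  rw [← Finset.prod_eq_zero (f := fun i => (0 : ℝ) ^ d i) (Finset.mem_univ i₀) (zero_pow hi₀)]
  refine tendsto_finsetProd _ fun i _ => ?_
  rcases lt_or_ge i j with hij | hji
  · exact (hu i hij).pow (d i)
  · simpa only [d_eq_zero i hji, pow_zero] using tendsto_const_nhds

theorem tendsto_majorantMap_iterate_apply (D : ℕ) (M : ℝ) {θ : ℝ} (hθ : |θ| < 1) (u : ι → ℝ)
    (j : ι) :
    Tendsto (fun n => (majorantMap D M θ)^[n] u j) atTop (𝓝 0) := by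
  induction j using WellFoundedLT.induction with
  | ind j ih =>
    have perturbation : Tendsto (fun n => ‖M * ∑ d ∈ lowerExponents D j,
        ∏ i, (majorantMap D M θ)^[n] u i ^ d i‖) atTop (𝓝 0) := by
      simpa using ((tendsto_sum_lowerExponents D ih).const_mul M).norm
    refine tendsto_zero_of_norm_succ_le_mul_add (abs_nonneg θ) hθ perturbation fun n => ?_
    rw [Function.iterate_succ_apply', ← Real.norm_eq_abs, ← norm_mul]
    exact norm_add_le _ _

variable [NormedCommRing 𝕜] [NormOneClass 𝕜] {D : ℕ} {M θ : ℝ}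

theorem IsLowerTriangular.norm_polyMap_le {P : ι → MvPolynomial ι 𝕜} (hP : IsLowerTriangular P)
    {j : ι} (hdeg : (P j).totalDegree ≤ D) (hcoef : ∀ d, ‖(P j).coeff d‖ ≤ M)
    (hdiag : ‖(P j).coeff (Finsupp.single j 1)‖ ≤ θ) (z : ι → 𝕜) :
    ‖polyMap P z j‖ ≤ majorantMap D M θ (fun i => ‖z i‖) j := by
  have prod_single : ∏ i, ‖z i‖ ^ Finsupp.single j 1 i = ‖z j‖ := by
    simp [Finsupp.single_apply, pow_ite]
  calc ‖polyMap P z j‖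
      = ‖∑ d ∈ (P j).support, (P j).coeff d * ∏ i, z i ^ d i‖ := by
        rw [polyMap, MvPolynomial.eval_eq']
    _ ≤ ∑ d ∈ (P j).support, ‖(P j).coeff d‖ * ∏ i, ‖z i‖ ^ d i :=
        norm_sum_le_of_le _ fun d _ => (norm_mul_le _ _).trans <| by
          gcongr
          exact norm_prod_pow_le _ z d
    _ ≤ ∑ d ∈ insert (Finsupp.single j 1) (lowerExponents D j),
          ‖(P j).coeff d‖ * ∏ i, ‖z i‖ ^ d i :=
        Finset.sum_le_sum_of_subset_of_nonneg (hP.support_subset hdeg) fun _ _ _ => by positivity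
    _ = ‖(P j).coeff (Finsupp.single j 1)‖ * ‖z j‖ +
          ∑ d ∈ lowerExponents D j, ‖(P j).coeff d‖ * ∏ i, ‖z i‖ ^ d i := by
        rw [Finset.sum_insert (single_notMem_lowerExponents D j), prod_single]
    _ ≤ majorantMap D M θ (fun i => ‖z i‖) j := by
        rw [majorantMap, Finset.mul_sum]
        gcongr with d
        exact hcoef d

theorem norm_polyMapComp_le_majorantMap_iterate {G : ℕ → ι → MvPolynomial ι 𝕜}
    (hLT : ∀ n, IsLowerTriangular (G n)) (hdeg : ∀ n j, (G n j).totalDegree ≤ D)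
    (hcoef : ∀ n j d, ‖(G n j).coeff d‖ ≤ M)
    (hdiag : ∀ n j, ‖(G n j).coeff (Finsupp.single j 1)‖ ≤ θ) {z : ι → 𝕜} {u : ι → ℝ}
    (hzu : ∀ j, ‖z j‖ ≤ u j) (n : ℕ) (j : ι) :
    ‖polyMapComp G n z j‖ ≤ (majorantMap D M θ)^[n] u j := by
  induction n generalizing j with
  | zero => exact hzu j
  | succ n ih =>
    have hM : 0 ≤ M := (norm_nonneg _).trans (hcoef n j 0)
    have hθ : 0 ≤ θ := (norm_nonneg _).trans (hdiag n j)
    rw [Function.iterate_succ_apply']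
    exact ((hLT n).norm_polyMap_le (hdeg n j) (hcoef n j) (hdiag n j) _).trans
      (majorantMap_apply_mono hM hθ (fun _ => norm_nonneg _) ih j)

end Majorant

theorem lower_triangular_compositions_to_zero_general [Finite ι] [NormedCommRing 𝕜]
    [NormOneClass 𝕜] {D : ℕ} {M θ : ℝ} (hθ : θ < 1)
    {G : ℕ → ι → MvPolynomial ι 𝕜} (hLT : ∀ n, IsLowerTriangular (G n))
    (hdeg : ∀ n j, (G n j).totalDegree ≤ D) (hcoef : ∀ n j d, ‖(G n j).coeff d‖ ≤ M)
    (hdiag : ∀ n j, ‖(G n j).coeff (Finsupp.single j 1)‖ ≤ θ)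
    {s : Set (ι → 𝕜)} (hs : Bornology.IsBounded s) :
    TendstoUniformlyOn (polyMapComp G) 0 atTop s := by
  cases nonempty_fintype ι
  obtain ⟨R, hR⟩ := hs.exists_norm_le
  let v : ℕ → ι → ℝ := fun n => (majorantMap D M θ)^[n] fun _ => R
  have v_tendsto : Tendsto v atTop (𝓝 0) := tendsto_pi_nhds.2 fun j =>
    tendsto_majorantMap_iterate_apply D M
      (by rwa [abs_of_nonneg ((norm_nonneg _).trans (hdiag 0 j))]) _ j
  have norm_le : ∀ n, ∀ z ∈ s, ‖polyMapComp G n z‖ ≤ ‖v n‖ := fun n z hz =>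
    (pi_norm_le_iff_of_nonneg (norm_nonneg _)).2 fun j =>
      (norm_polyMapComp_le_majorantMap_iterate hLT hdeg hcoef hdiag
        (fun i => (norm_le_pi_norm z i).trans (hR z hz)) n j).trans <|
      (Real.le_norm_self _).trans (norm_le_pi_norm (v n) j)
  rw [SeminormedAddGroup.tendstoUniformlyOn_zero]
  intro ε hε
  filter_upwards [NormedAddGroup.tendsto_nhds_zero.1 v_tendsto ε hε] with n hn z hz
  exact (norm_le n z hz).trans_lt hn

end LowerTriangular

section EuclideanSpace

variable {k : ℕ} {G : ℕ → Fin k → MvPolynomial (Fin k) ℂ}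

theorem eval_polyComp (n : ℕ) (z : Fin k → ℂ) (j : Fin k) :
    MvPolynomial.eval z (polyComp G n j) = polyMapComp G n z j := by
  induction n generalizing j with
  | zero => exact MvPolynomial.eval_X j
  | succ n ih =>
    calc MvPolynomial.eval z (MvPolynomial.bind₁ (polyComp G n) (G n j))
        = MvPolynomial.eval (fun i => MvPolynomial.eval z (polyComp G n i)) (G n j) :=
          MvPolynomial.eval₂Hom_bind₁ _ _ _ _
      _ = MvPolynomial.eval (polyMapComp G n z) (G n j) := by simp only [ih]

theorem evalPolyMap_polyComp (n : ℕ) (z : Ck k) :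
    evalPolyMap (polyComp G n) z = WithLp.toLp 2 (polyMapComp G n (WithLp.ofLp z)) :=
  congrArg (WithLp.toLp 2) (funext (eval_polyComp n z.ofLp))

theorem eventually_evalPolyMap_polyComp_image_ball_subset
    (hG : ∀ s, Bornology.IsBounded s → TendstoUniformlyOn (polyMapComp G) 0 atTop s)
    (R : ℝ) {ε : ℝ} (hε : 0 < ε) :
    ∀ᶠ n in atTop, evalPolyMap (polyComp G n) '' ball (0 : Ck k) R ⊆ ball (0 : Ck k) ε := by
  have coords_bounded : Bornology.IsBounded (WithLp.ofLp '' ball (0 : Ck k) R) :=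
    (PiLp.lipschitzWith_ofLp 2 _).isBounded_image isBounded_ball
  have euclidean := (PiLp.uniformContinuous_toLp 2 _).comp_tendstoUniformlyOn (hG _ coords_bounded)
  filter_upwards [Metric.tendstoUniformlyOn_iff.1 euclidean ε hε] with n hn
  rintro _ ⟨z, hz, rfl⟩
  rw [evalPolyMap_polyComp, mem_ball']
  exact hn z.ofLp (Set.mem_image_of_mem _ hz)

end EuclideanSpace

/-- **Lemma (upper, part (b)).** If moreover the linear diagonal coefficients `c_{n,j}`
(the coefficient of `z_j` in the `j`-th component of `G_n`) satisfy `|c_{n,j}| < θ < 1`,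
then `G(n) → 0` uniformly on compact subsets: for every `R > 0` and `ε > 0` there is `N`
such that `G(n)(B(R)) ⊆ B(ε)` for all `n ≥ N`. -/
theorem lower_triangular_compositions_to_zero (k D : ℕ) (M θ : ℝ) (hM : 0 < M) (hθ : θ < 1)
    (G : ℕ → Fin k → MvPolynomial (Fin k) ℂ)
    (hLT : ∀ n, LowerTriPolyMap (G n))
    (hdeg : ∀ n j, (G n j).totalDegree ≤ D)
    (hcoef : ∀ n j d, ‖(G n j).coeff d‖ ≤ M)
    (hdiag : ∀ n (j : Fin k), ‖(G n j).coeff (Finsupp.single j 1)‖ < θ) :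
    ∀ R : ℝ, 0 < R → ∀ ε : ℝ, 0 < ε → ∃ N : ℕ, ∀ n, N ≤ n →
      evalPolyMap (polyComp G n) '' ball (0 : Ck k) R ⊆ ball (0 : Ck k) ε := by
  intro R _ ε hε
  exact eventually_atTop.1 <| eventually_evalPolyMap_polyComp_image_ball_subset
    (fun _ => lower_triangular_compositions_to_zero_general hθ hLT hdeg hcoef
      fun n j => (hdiag n j).le) R hε
end
end

section
/- Let c > 1 and A, M > 0, and let F_1, F_2, … be a sequence of affine maps of ℂ, F_n(z) = a_n z + b_n, with c ≤ |a_n| ≤ A and |b_n| ≤ M for every n. Then there exists z_0 ∈ ℂ and R > 0 such that the orbit defined by z_n = F_n(z_{n−1}) satisfies |z_n| ≤ R for every n ≥ 0. -/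
open Metric Filter Topology

noncomputable section

/-!
The inverses of uniformly expanding maps are uniform contractions `G n`, and a sequence `z` is an
orbit exactly when `z n = G n (z (n + 1))` for all `n`. Hence the bounded orbits are the fixed
points of the operator `z ↦ (n ↦ G n (z (n + 1)))` on the complete space of bounded sequences with
the sup metric. This operator is itself a contraction, so Banach's fixed point theorem applies.
-/

section BoundedOrbit

open Bornology Set
open scoped NNReal BoundedContinuousFunction

variable {ι X : Type*} {K : ℝ≥0} {x₀ : X}

lemma isBounded_range_apply_of_lipschitzWith [PseudoMetricSpace X] {G : ι → X → X}
    (hG : ∀ i, LipschitzWith K (G i)) (hx₀ : IsBounded (range fun i ↦ G i x₀))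
    {w : ι → X} (hw : IsBounded (range w)) : IsBounded (range fun i ↦ G i (w i)) := by
  obtain ⟨r, hr⟩ := (isBounded_iff_subset_closedBall x₀).1 hx₀
  obtain ⟨s, hs⟩ := (isBounded_iff_subset_closedBall x₀).1 hw
  refine (isBounded_iff_subset_closedBall x₀).2 ⟨K * s + r, range_subset_iff.2 fun i ↦ ?_⟩
  calc dist (G i (w i)) x₀
      ≤ dist (G i (w i)) (G i x₀) + dist (G i x₀) x₀ := dist_triangle _ _ _
    _ ≤ K * dist (w i) x₀ + r := add_le_add ((hG i).dist_le_mul _ _) (hr (mem_range_self i))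
    _ ≤ K * s + r := by gcongr; exact hs (mem_range_self i)

section Pullback

variable [TopologicalSpace ι] [DiscreteTopology ι]

/-- The graph transform `z ↦ (i ↦ G i (z (σ i)))` on bounded families in `X`, whose fixed points
are the bounded backward orbits of `G` along `σ`. The sup metric on bounded families is that of
`ι →ᵇ X`, which is why `ι` carries the discrete topology. -/
def pullbackAlong [PseudoMetricSpace X] (G : ι → X → X) (σ : ι → ι)
    (hG : ∀ i, LipschitzWith K (G i)) (hx₀ : IsBounded (range fun i ↦ G i x₀)) (z : ι →ᵇ X) :
    ι →ᵇ X where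
  toFun i := G i (z (σ i))
  continuous_toFun := continuous_of_discreteTopology
  map_bounded' := isBounded_range_iff.1 <| isBounded_range_apply_of_lipschitzWith hG hx₀ <|
    z.isBounded_range.subset (range_comp_subset_range σ z)

lemma lipschitzWith_pullbackAlong [PseudoMetricSpace X] {G : ι → X → X} (σ : ι → ι)
    (hG : ∀ i, LipschitzWith K (G i)) (hx₀ : IsBounded (range fun i ↦ G i x₀)) :
    LipschitzWith K (pullbackAlong G σ hG hx₀) :=
  LipschitzWith.of_dist_le_mul fun z w ↦
    (BoundedContinuousFunction.dist_le (by positivity)).2 fun i ↦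
      calc dist (G i (z (σ i))) (G i (w (σ i)))
          ≤ K * dist (z (σ i)) (w (σ i)) := (hG i).dist_le_mul _ _
        _ ≤ K * dist z w := by gcongr; exact BoundedContinuousFunction.dist_coe_le_dist _

end Pullback

variable [MetricSpace X] [CompleteSpace X]

theorem exists_isBounded_backward_orbit (hK : K < 1) {G : ι → X → X} (σ : ι → ι)
    (hG : ∀ i, LipschitzWith K (G i)) (hx₀ : IsBounded (range fun i ↦ G i x₀)) :
    ∃ z : ι → X, (∀ i, G i (z (σ i)) = z i) ∧ IsBounded (range z) := by
  let _ : TopologicalSpace ι := ⊥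
  have : DiscreteTopology ι := ⟨rfl⟩
  have : Nonempty (ι →ᵇ X) := ⟨.const ι x₀⟩
  have hT : ContractingWith K (pullbackAlong G σ hG hx₀) :=
    ⟨hK, lipschitzWith_pullbackAlong σ hG hx₀⟩
  let z := ContractingWith.fixedPoint _ hT
  exact ⟨z, fun i ↦ DFunLike.congr_fun hT.fixedPoint_isFixedPt i, z.isBounded_range⟩

theorem exists_isBounded_orbit_of_antilipschitzWith (hK : K < 1) {F : ι → X → X} (σ : ι → ι)
    (hF : ∀ i, AntilipschitzWith K (F i)) (hF_surj : ∀ i, (F i).Surjective)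
    (hx₀ : IsBounded (range fun i ↦ F i x₀)) :
    ∃ z : ι → X, (∀ i, z (σ i) = F i (z i)) ∧ IsBounded (range z) := by
  choose G hFG using fun i ↦ (hF_surj i).hasRightInverse
  have hG : ∀ i, LipschitzWith K (G i) := fun i ↦ (hF i).to_rightInverse (hFG i)
  have hGx₀ : IsBounded (range fun i ↦ G i x₀) := by
    obtain ⟨r, hr⟩ := (isBounded_iff_subset_closedBall x₀).1 hx₀
    refine (isBounded_iff_subset_closedBall x₀).2 ⟨K * r, range_subset_iff.2 fun i ↦ ?_⟩
    calc dist (G i x₀) x₀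
        ≤ K * dist (F i (G i x₀)) (F i x₀) := (hF i).le_mul_dist _ _
      _ = K * dist (F i x₀) x₀ := by rw [hFG i x₀, dist_comm]
      _ ≤ K * r := by gcongr; exact hr (mem_range_self i)
  obtain ⟨z, hz, hz_bdd⟩ := exists_isBounded_backward_orbit hK σ hG hGx₀
  exact ⟨z, fun i ↦ by rw [← hz i, hFG i], hz_bdd⟩

end BoundedOrbit

lemma antilipschitzWith_smul_add {𝕜 E : Type*} [NormedDivisionRing 𝕜] [SeminormedAddCommGroup E]
    [Module 𝕜 E] [NormSMulClass 𝕜 E] {c : NNReal} (hc : 0 < c) {a : 𝕜} (ha : c ≤ ‖a‖) (b : E) :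
    AntilipschitzWith c⁻¹ fun x : E ↦ a • x + b :=
  AntilipschitzWith.of_le_mul_dist fun x y ↦ by
    rw [dist_add_right, dist_smul₀, NNReal.coe_inv, le_inv_mul_iff₀ (NNReal.coe_pos.2 hc)]
    gcongr

lemma surjective_smul_add {𝕜 E : Type*} [GroupWithZero 𝕜] [AddGroup E] [MulAction 𝕜 E] {a : 𝕜}
    (ha : a ≠ 0) (b : E) : Function.Surjective fun x : E ↦ a • x + b :=
  (add_right_surjective b).comp (MulAction.surjective₀ ha)

theorem expanding_affine_bounded_orbit_general {𝕜 E : Type*} [NormedDivisionRing 𝕜]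
    [NormedAddCommGroup E] [Module 𝕜 E] [NormSMulClass 𝕜 E] [CompleteSpace E] {c M : ℝ}
    (hc : 1 < c) {a : ℕ → 𝕜} {b : ℕ → E} (ha : ∀ n, c ≤ ‖a n‖) (hb : ∀ n, ‖b n‖ ≤ M) :
    ∃ z : ℕ → E, (∀ n, z (n + 1) = a n • z n + b n) ∧ ∃ R : ℝ, 0 < R ∧ ∀ n, ‖z n‖ ≤ R := by
  lift c to NNReal using zero_le_one.trans hc.le
  rw [NNReal.one_lt_coe] at hc
  have hc₀ : 0 < c := zero_lt_one.trans hc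
  have ha₀ : ∀ n, a n ≠ 0 := fun n ↦ norm_pos_iff.1 ((NNReal.coe_pos.2 hc₀).trans_le (ha n))
  have hanti : ∀ n, AntilipschitzWith c⁻¹ fun x : E ↦ a n • x + b n := fun n ↦
    antilipschitzWith_smul_add hc₀ (ha n) (b n)
  have hbdd : Bornology.IsBounded (Set.range fun n ↦ a n • (0 : E) + b n) :=
    isBounded_iff_forall_norm_le.2 ⟨M, Set.forall_mem_range.2 fun n ↦ by simpa using hb n⟩
  obtain ⟨z, hz, hz_bdd⟩ := exists_isBounded_orbit_of_antilipschitzWith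
    (inv_lt_one_of_one_lt₀ hc) Nat.succ hanti (fun n ↦ surjective_smul_add (ha₀ n) (b n)) hbdd
  obtain ⟨R, hR, hzR⟩ := hz_bdd.exists_pos_norm_le
  exact ⟨z, hz, R, hR, fun n ↦ hzR _ (Set.mem_range_self n)⟩

/-- **Lemma (affine).** Let `F_n(z) = a_n z + b_n` be a uniformly bounded sequence of
expanding affine maps of `ℂ` (`1 < c ≤ |a_n| ≤ A`, `|b_n| ≤ M`). Then there is a starting
point `z_0` whose orbit `z_n = F_n(z_{n-1})` is bounded. -/
theorem expanding_affine_bounded_orbit (c A M : ℝ) (hc : 1 < c) (hA : 0 < A) (hM : 0 < M)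
    (a b : ℕ → ℂ) (ha : ∀ n, c ≤ ‖a n‖ ∧ ‖a n‖ ≤ A) (hb : ∀ n, ‖b n‖ ≤ M) :
    ∃ z : ℕ → ℂ, (∀ n, z (n + 1) = a n * z n + b n) ∧
      ∃ R : ℝ, 0 < R ∧ ∀ n, ‖z n‖ ≤ R :=
  expanding_affine_bounded_orbit_general hc (fun n ↦ (ha n).1) hb
end
end
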